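/- arXiv:math/0503449 — 2 statements merged into one kernel-verified Lean document; each statement's English description precedes it below -/
import Mathlib

section
/- Let n ≥ 2 and let X ⊆ ℂ^n be an open set, with d the Euclidean distance on ℂ^n. Let Ω be an open set whose closure is compact and contained in X, and let Ω₀ be an open set whose closure is compact and contained in Ω. Let f be a holomorphic map from an open neighborhood of 𝔻̄ into X. Let K be a compact subset of X and r with 0 < r < 1 be such that K ∩ Ω = ∅ and K ∩ f(𝔻̄ \ r𝔻) = ∅. Assume H : b𝔻 × 𝔻̄ → X is a continuous map such that: (i) for each ζ ∈ b𝔻 the map η ↦ H(ζ, η) is holomorphic on 𝔻; (ii) H(ζ, 0) = f(ζ) for all ζ ∈ b𝔻; (iii) if ζ ∈ b𝔻 and f(ζ) ∉ Ω₀ then H(ζ, η) = f(ζ) for all η ∈ 𝔻̄; (iv) if ζ ∈ b𝔻 and f(ζ) ∈ Ω₀ then H(ζ, η) ∈ Ω for all η ∈ 𝔻̄. Then for every ε > 0 there is a continuous map g : 𝔻̄ → X, holomorphic on 𝔻, such that: (i') for every ζ ∈ b𝔻 the distance from g(ζ) to the set H({ζ} × b𝔻) is less than ε; (ii') d(g(ζ),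 f(ζ)) < ε for all |ζ| ≤ r; (iii') g(𝔻̄ \ r𝔻) ∩ K = ∅; (iv') g(0) = f(0); (v') g′(0) = R·f′(0) for some R with r < R < 1. -/
open Metric

/-!
The new disc is `g ζ = f (R ζ) + v ζ`, where `R` is close to `1` and `v` is concentrated near the
unit circle. To find `v`, approximate `H ζ η - f ζ` by `ζ ^ (-m) G(ζ, η)` with `G` holomorphic and
`G(ζ, η) = O(η)`: use a partition of unity on the circle to reduce to finitely many slices `ζ = a`,
and replace the partition functions by trigonometric polynomials. Substituting `η = ζ ^ (m + k)`
cancels the pole and leaves `v ζ = O(ζ ^ k)`, which vanishes to second order at the center. For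
large `k` it is small on `|ζ| ≤ R`, so `g` is close to `f` there; on `R ≤ |ζ| ≤ 1`, `g ζ` is close
to the value of `H (ζ / |ζ|)` at `ζ ^ (m + k)`, which is unimodular when `ζ` is.
-/

open Filter Function Set Topology
open scoped Polynomial

theorem eventually_exists_polynomial_eval_eq_pow_mul_of_mem_span_fourier {T : ℝ}
    {u : C(AddCircle T, ℂ)} (hu : u ∈ Submodule.span ℂ (range (fourier (T := T)))) :
    ∀ᶠ m : ℕ in atTop, ∃ p : ℂ[X], ∀ x : AddCircle T,
      p.eval (x.toCircle : ℂ) = (x.toCircle : ℂ) ^ m * u x := by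
  induction hu using Submodule.span_induction with
  | mem u hu =>
    obtain ⟨n, rfl⟩ := hu
    filter_upwards [eventually_ge_atTop n.natAbs] with m hm
    refine ⟨.X ^ (m + n).toNat, fun x => ?_⟩
    have hmn : ((m + n).toNat : ℤ) = m + n := Int.toNat_of_nonneg (by omega)
    rw [fourier_apply, AddCircle.toCircle_zsmul, Circle.coe_zpow, Polynomial.eval_pow,
      Polynomial.eval_X, ← zpow_natCast, ← zpow_natCast, hmn, zpow_add₀ x.toCircle.coe_ne_zero]
  | zero => exact .of_forall fun m => ⟨0, by simp⟩
  | add u v _ _ hu hv =>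
    filter_upwards [hu, hv] with m ⟨p, hp⟩ ⟨q, hq⟩
    exact ⟨p + q, fun x => by simp [hp, hq, mul_add]⟩
  | smul c u _ hu =>
    filter_upwards [hu] with m ⟨p, hp⟩
    exact ⟨c • p, fun x => by simp [hp, mul_left_comm]⟩

theorem eventually_exists_polynomial_norm_eval_sub_pow_mul_lt {φ : ℂ → ℂ}
    (hφ : ContinuousOn φ (sphere 0 1)) {δ : ℝ} (hδ : 0 < δ) :
    ∀ᶠ m : ℕ in atTop, ∃ p : ℂ[X], ∀ ζ ∈ sphere (0 : ℂ) 1, ‖p.eval ζ - ζ ^ m * φ ζ‖ < δ := by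
  let φ' : C(UnitAddCircle, ℂ) :=
    ⟨fun x => φ x.toCircle, hφ.comp_continuous (by fun_prop) fun x => x.toCircle.2⟩
  have hφ' : φ' ∈ closure (Submodule.span ℂ (range (fourier (T := 1))) : Set _) := by
    rw [← Submodule.topologicalClosure_coe, span_fourier_closure_eq_top]
    trivial
  obtain ⟨u, hu, hφu⟩ := Metric.mem_closure_iff.1 hφ' δ hδ
  filter_upwards [eventually_exists_polynomial_eval_eq_pow_mul_of_mem_span_fourier hu]
    with m ⟨p, hp⟩
  refine ⟨p, fun ζ hζ => ?_⟩
  obtain ⟨x, hx⟩ := (AddCircle.homeomorphCircle (one_ne_zero' ℝ)).surjective ⟨ζ, hζ⟩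
  obtain rfl : (x.toCircle : ℂ) = ζ := by
    rw [← AddCircle.homeomorphCircle_apply one_ne_zero, hx]
  calc ‖p.eval (x.toCircle : ℂ) - x.toCircle ^ m * φ x.toCircle‖
      = dist (φ' x) (u x) := by
        rw [hp, ← mul_sub, norm_mul, norm_pow, Circle.norm_coe, one_pow, one_mul, dist_comm,
          dist_eq_norm]
        rfl
    _ < δ := (ContinuousMap.dist_apply_le_dist x).trans_lt hφu

theorem exists_partitionOfUnity_norm_sum_smul_sub_lt {α β E : Type*} [MetricSpace α]
    [PseudoMetricSpace β] [SeminormedAddCommGroup E] [NormedSpace ℝ E] {S : Set α} {T : Set β}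
    (hS : IsCompact S) (hT : IsCompact T) {F : α → β → E}
    (hF : ContinuousOn (uncurry F) (S ×ˢ T)) {δ : ℝ} (hδ : 0 < δ) :
    ∃ (t : Finset α) (φ : PartitionOfUnity t α S), (t : Set α) ⊆ S ∧
      ∀ x ∈ S, ∀ y ∈ T, ‖∑ a : t, φ a x • F a y - F x y‖ < δ := by
  obtain ⟨τ, hτ, hFτ⟩ := Metric.uniformContinuousOn_iff.1
    ((hS.prod hT).uniformContinuousOn_of_continuous hF) δ hδ
  obtain ⟨t, htS, htfin, hcover⟩ := hS.finite_cover_balls hτ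
  lift t to Finset α using htfin
  obtain ⟨φ, hφ⟩ := PartitionOfUnity.exists_isSubordinate hS.isClosed
    (fun a : t => ball (a : α) τ) (fun _ => isOpen_ball)
    (hcover.trans_eq (biUnion_eq_iUnion _ _))
  refine ⟨t, φ, htS, fun x hx y hy => ?_⟩
  rw [← mem_ball_iff_norm, ← finsum_eq_sum_of_fintype]
  refine φ.finsum_smul_mem_convex (g := fun a _ => F a y) hx (fun a ha => ?_) (convex_ball _ _)
  have hxa : dist x a < τ := hφ a (subset_tsupport _ ha)
  exact hFτ (a, y) ⟨htS a.2, hy⟩ (x, y) ⟨hx, hy⟩ (by simpa [Prod.dist_eq, dist_comm, hτ] using hxa)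

theorem exists_polynomial_norm_sum_smul_sub_pow_smul_lt {β E : Type*} [PseudoMetricSpace β]
    [SeminormedAddCommGroup E] [NormedSpace ℂ E] {T : Set β} (hT : IsCompact T) {F : ℂ → β → E}
    (hF : ContinuousOn (uncurry F) (sphere 0 1 ×ˢ T)) {δ : ℝ} (hδ : 0 < δ) :
    ∃ (t : Finset ℂ) (m : ℕ) (p : t → ℂ[X]), (t : Set ℂ) ⊆ sphere 0 1 ∧
      ∀ ζ ∈ sphere (0 : ℂ) 1, ∀ y ∈ T, ‖∑ a, (p a).eval ζ • F a y - ζ ^ m • F ζ y‖ < δ := by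
  have hS : IsCompact (sphere (0 : ℂ) 1) := isCompact_sphere 0 1
  obtain ⟨t, φ, htS, hφ⟩ := exists_partitionOfUnity_norm_sum_smul_sub_lt hS hT hF (half_pos hδ)
  obtain ⟨B, hB⟩ := (hS.prod hT).exists_bound_of_continuousOn hF
  obtain ⟨e, he, heB⟩ := exists_pos_mul_lt (half_pos hδ) (t.card * B)
  obtain ⟨m, hm⟩ := (eventually_all.2 fun a : t =>
    eventually_exists_polynomial_norm_eval_sub_pow_mul_lt (φ := fun ζ => (φ a ζ : ℂ))
      (by fun_prop) he).exists
  choose p hp using hm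
  refine ⟨t, m, p, htS, fun ζ hζ y hy => ?_⟩
  have hcoeff : ‖∑ a, ((p a).eval ζ - ζ ^ m * φ a ζ) • F a y‖ ≤ t.card * B * e :=
    calc _ ≤ ∑ _a : t, e * B := norm_sum_le_of_le _ fun a _ => by
            rw [norm_smul]
            exact mul_le_mul (hp a ζ hζ).le (hB (a, y) ⟨htS a.2, hy⟩) (norm_nonneg _) he.le
      _ = t.card * B * e := by
            rw [Finset.sum_const, Finset.card_univ, Fintype.card_coe, nsmul_eq_mul]; ring
  have hslice : ‖ζ ^ m • (∑ a, φ a ζ • F a y - F ζ y)‖ < δ / 2 := by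
    rw [norm_smul, norm_pow, mem_sphere_zero_iff_norm.1 hζ, one_pow, one_mul]
    exact hφ ζ hζ y hy
  have hsplit : ∑ a, (p a).eval ζ • F a y - ζ ^ m • F ζ y =
      ∑ a, ((p a).eval ζ - ζ ^ m * φ a ζ) • F a y +
        ζ ^ m • (∑ a, φ a ζ • F a y - F ζ y) := by
    simp only [sub_smul, Finset.sum_sub_distrib, mul_smul, Complex.coe_smul, smul_sub,
      Finset.smul_sum, sub_add_sub_cancel]
  rw [hsplit]
  exact (norm_add_le _ _).trans_lt (by linarith)

theorem exists_norm_le_mul_norm_of_differentiableAt_zero {𝕜 E : Type*}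
    [NontriviallyNormedField 𝕜] [NormedAddCommGroup E] [NormedSpace 𝕜 E] {s : Set 𝕜}
    (hs : IsCompact s) (hs₀ : s ∈ 𝓝 0) {F : 𝕜 → E} (hF : ContinuousOn F s)
    (hF' : DifferentiableAt 𝕜 F 0) (hF₀ : F 0 = 0) : ∃ C, ∀ x ∈ s, ‖F x‖ ≤ C * ‖x‖ := by
  obtain ⟨C, hC⟩ := hs.exists_bound_of_continuousOn ((continuousOn_dslope hs₀).2 ⟨hF, hF'⟩)
  refine ⟨C, fun x hx => ?_⟩
  have hFx : x • dslope F 0 x = F x := by simpa [hF₀] using sub_smul_dslope F 0 x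
  rw [← hFx, norm_smul, mul_comm]
  exact mul_le_mul_of_nonneg_right (hC x hx) (norm_nonneg x)

section Radial

variable {V β Y : Type*} [NormedAddCommGroup V] [NormedSpace ℝ V] [PseudoMetricSpace β]
  [PseudoMetricSpace Y]

theorem dist_inv_norm_smul_self {x : V} (hx : x ≠ 0) : dist x (‖x‖⁻¹ • x) = |‖x‖ - 1| := by
  have hsub : x - ‖x‖⁻¹ • x = ((‖x‖ - 1) * ‖x‖⁻¹) • x := by
    rw [sub_mul, mul_inv_cancel₀ (norm_ne_zero_iff.2 hx), sub_smul, one_smul, one_mul]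
  rw [dist_eq_norm, hsub, norm_smul, norm_mul, norm_inv, norm_norm,
    inv_mul_cancel_right₀ (norm_ne_zero_iff.2 hx), Real.norm_eq_abs]

theorem eventually_forall_dist_smul_lt {F : V → Y}
    (hF : UniformContinuousOn F (closedBall 0 1)) {δ : ℝ} (hδ : 0 < δ) :
    ∀ᶠ R in 𝓝[<] (1 : ℝ), ∀ x ∈ closedBall (0 : V) 1, dist (F (R • x)) (F x) < δ := by
  obtain ⟨τ, hτ, hFτ⟩ := Metric.uniformContinuousOn_iff.1 hF δ hδ
  filter_upwards [Ioo_mem_nhdsLT zero_lt_one, Ioo_mem_nhdsLT (sub_lt_self 1 hτ)]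
    with R ⟨hR₀, hR₁⟩ ⟨hRτ, _⟩ x hx
  have hx₁ : ‖x‖ ≤ 1 := mem_closedBall_zero_iff.1 hx
  refine hFτ _ ?_ x hx ?_
  · rw [mem_closedBall_zero_iff, norm_smul, Real.norm_of_nonneg hR₀.le]
    exact mul_le_one₀ hR₁.le (norm_nonneg x) hx₁
  · calc dist (R • x) x = (1 - R) * ‖x‖ := by
          rw [dist_comm, dist_eq_norm, show x - R • x = (1 - R) • x by module, norm_smul,
            Real.norm_of_nonneg (sub_nonneg.2 hR₁.le)]
      _ ≤ 1 - R := mul_le_of_le_one_right (sub_nonneg.2 hR₁.le) hx₁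
      _ < τ := sub_lt_comm.1 hRτ

theorem eventually_forall_dist_inv_norm_smul_lt {T : Set β} {s : ℝ} (hs : s < 1) {F : V → β → Y}
    (hF : UniformContinuousOn (uncurry F) ((closedBall 0 1 \ ball 0 s) ×ˢ T)) {δ : ℝ}
    (hδ : 0 < δ) :
    ∀ᶠ R in 𝓝[<] (1 : ℝ), ∀ x ∈ closedBall (0 : V) 1, R ≤ ‖x‖ → ∀ y ∈ T,
      dist (F x y) (F (‖x‖⁻¹ • x) y) < δ := by
  obtain ⟨τ, hτ, hFτ⟩ := Metric.uniformContinuousOn_iff.1 hF δ hδ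
  filter_upwards [Ioo_mem_nhdsLT zero_lt_one, Ioo_mem_nhdsLT hs,
    Ioo_mem_nhdsLT (sub_lt_self 1 hτ)] with R ⟨hR₀, _⟩ ⟨hRs, _⟩ ⟨hRτ, _⟩ x hx hRx y hy
  have hx₀ : x ≠ 0 := norm_pos_iff.1 (hR₀.trans_le hRx)
  have hx₁ : ‖x‖ ≤ 1 := mem_closedBall_zero_iff.1 hx
  have hxω : ‖‖x‖⁻¹ • x‖ = 1 := by simp [norm_smul, hx₀]
  refine hFτ (x, y) ⟨⟨hx, ?_⟩, hy⟩ (‖x‖⁻¹ • x, y) ⟨⟨?_, ?_⟩, hy⟩ ?_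
  · simpa using (hRs.trans_le hRx).le
  · exact mem_closedBall_zero_iff.2 hxω.le
  · simpa [hxω] using hs.le
  · rw [dist_prod_same_right, dist_inv_norm_smul_self hx₀, abs_sub_comm,
      abs_of_nonneg (sub_nonneg.2 hx₁)]
    linarith

end Radial

section AttachedDiscs

variable {E : Type*} [NormedAddCommGroup E] [NormedSpace ℂ E]

theorem exists_holomorphic_norm_sub_pow_smul_lt {h : ℂ → ℂ → E}
    (hc : ContinuousOn (uncurry h) (sphere 0 1 ×ˢ closedBall 0 1))
    (hd : ∀ ζ ∈ sphere (0 : ℂ) 1, DifferentiableOn ℂ (h ζ) (ball 0 1))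
    (h₀ : ∀ ζ ∈ sphere (0 : ℂ) 1, h ζ 0 = 0) {δ : ℝ} (hδ : 0 < δ) :
    ∃ (m : ℕ) (G : ℂ → ℂ → E) (C : ℝ), DiffContOnCl ℂ (uncurry G) (univ ×ˢ ball 0 1) ∧
      (∀ ζ ∈ closedBall (0 : ℂ) 1, ∀ η ∈ closedBall (0 : ℂ) 1, ‖G ζ η‖ ≤ C * ‖η‖) ∧
      ∀ ζ ∈ sphere (0 : ℂ) 1, ∀ η ∈ closedBall (0 : ℂ) 1, ‖G ζ η - ζ ^ m • h ζ η‖ < δ := by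
  have hD : closedBall (0 : ℂ) 1 ∈ 𝓝 0 := closedBall_mem_nhds 0 one_pos
  have hDcpt : IsCompact (closedBall (0 : ℂ) 1) := isCompact_closedBall 0 1
  obtain ⟨t, m, p, htS, hp⟩ := exists_polynomial_norm_sum_smul_sub_pow_smul_lt hDcpt hc hδ
  have hslice (a : t) : ContinuousOn (h a) (closedBall 0 1) :=
    hc.comp (f := fun η => ((a : ℂ), η)) (by fun_prop) fun η hη => ⟨htS a.2, hη⟩
  have hslice' (a : t) : DiffContOnCl ℂ (h a) (ball 0 1) := .mk_ball (hd a (htS a.2)) (hslice a)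
  choose C hC using fun a : t => exists_norm_le_mul_norm_of_differentiableAt_zero hDcpt hD
    (hslice a) ((hslice' a).differentiableAt' (ball_mem_nhds 0 one_pos)) (h₀ a (htS a.2))
  choose B hB using fun a : t =>
    hDcpt.exists_bound_of_continuousOn (p a).continuous.continuousOn
  refine ⟨m, fun ζ η => ∑ a, (p a).eval ζ • h a η, ∑ a, B a * C a, ?_, fun ζ hζ η hη => ?_, hp⟩
  · have hterm (a : t) : DiffContOnCl ℂ (fun z : ℂ × ℂ => (p a).eval z.1 • h a z.2)
        (univ ×ˢ ball 0 1) :=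
      ((p a).differentiable.comp differentiable_fst).diffContOnCl.smul
        ((hslice' a).comp differentiable_snd.diffContOnCl fun z hz => hz.2)
    exact ⟨.fun_sum fun a _ => (hterm a).differentiableOn,
      continuousOn_finsetSum _ fun a _ => (hterm a).continuousOn⟩
  · rw [Finset.sum_mul]
    refine norm_sum_le_of_le _ fun a _ => ?_
    rw [norm_smul, mul_assoc]
    exact mul_le_mul (hB a ζ hζ) (hC a η hη) (norm_nonneg _) ((norm_nonneg _).trans (hB a ζ hζ))

/-- The correction `ζ ↦ ζ ^ (-m) G(ζ, ζ ^ (m + k))` added to a disc in order to push its boundary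
into the attached discs. It is meant for `G ζ η = O(η)` and `k ≠ 0`; then the junk value
`0⁻¹ = 0` agrees with the value obtained by removing the singularity at the origin. -/
noncomputable def boundaryCorrection (G : ℂ → ℂ → E) (m k : ℕ) (ζ : ℂ) : E :=
  (ζ ^ m)⁻¹ • G ζ (ζ ^ (m + k))

namespace boundaryCorrection

variable {G : ℂ → ℂ → E} {C : ℝ} {m k : ℕ}

theorem norm_le
    (hG : ∀ ζ ∈ closedBall (0 : ℂ) 1, ∀ η ∈ closedBall (0 : ℂ) 1, ‖G ζ η‖ ≤ C * ‖η‖)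
    (hk : k ≠ 0) {ζ : ℂ} (hζ : ζ ∈ closedBall 0 1) :
    ‖boundaryCorrection G m k ζ‖ ≤ C * ‖ζ‖ ^ k := by
  have hGζ : ‖G ζ (ζ ^ (m + k))‖ ≤ C * ‖ζ‖ ^ (m + k) := by
    simpa only [norm_pow] using hG ζ hζ _
      ((Submonoid.unitClosedBall ℂ).pow_mem hζ (m + k))
  rw [boundaryCorrection, norm_smul, norm_inv, norm_pow]
  rcases eq_or_ne ζ 0 with rfl | hζ₀
  · have hG₀ : G 0 0 = 0 := by simpa [hk] using hGζ
    simp [hG₀, hk]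
  · rw [inv_mul_le_iff₀ (by positivity)]
    exact hGζ.trans_eq (by ring)

theorem hasDerivAt_zero
    (hG : ∀ ζ ∈ closedBall (0 : ℂ) 1, ∀ η ∈ closedBall (0 : ℂ) 1, ‖G ζ η‖ ≤ C * ‖η‖)
    (hk : 1 < k) : HasDerivAt (boundaryCorrection G m k) 0 0 := by
  have hO : boundaryCorrection G m k =O[𝓝 0] fun ζ => ‖ζ - 0‖ ^ k := by
    refine .of_bound C ?_
    filter_upwards [closedBall_mem_nhds (0 : ℂ) one_pos] with ζ hζ
    simpa using norm_le hG (by omega) hζ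
  simpa [hasDerivAt_iff_hasFDerivAt] using hO.hasFDerivAt hk

theorem diffContOnCl (hG : DiffContOnCl ℂ (uncurry G) (univ ×ˢ ball 0 1))
    (hv : DifferentiableAt ℂ (boundaryCorrection G m k) 0) (hmk : m + k ≠ 0) :
    DiffContOnCl ℂ (boundaryCorrection G m k) (ball 0 1) := by
  have hcomp : DiffContOnCl ℂ (fun ζ => G ζ (ζ ^ (m + k))) (ball 0 1) :=
    hG.comp (g := fun ζ : ℂ => (ζ, ζ ^ (m + k))) (Differentiable.diffContOnCl (by fun_prop))
      fun ζ hζ => ⟨trivial, by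
        rw [mem_ball_zero_iff] at hζ ⊢
        exact (norm_pow ζ _).trans_lt (pow_lt_one₀ (norm_nonneg ζ) hζ hmk)⟩
  refine ⟨fun ζ hζ => ?_, fun ζ hζ => ?_⟩ <;> rcases eq_or_ne ζ 0 with rfl | hζ₀
  · exact hv.differentiableWithinAt
  · exact DifferentiableWithinAt.smul (by fun_prop (disch := simp [hζ₀]))
      (hcomp.differentiableOn ζ hζ)
  · exact hv.continuousAt.continuousWithinAt
  · exact ContinuousWithinAt.smul (ContinuousAt.continuousWithinAt
      (by fun_prop (disch := simp [hζ₀]))) (hcomp.continuousOn ζ hζ)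

end boundaryCorrection

theorem diffContOnCl_comp_ofReal_mul {f : ℂ → E} (hf : DiffContOnCl ℂ f (ball 0 1)) {R : ℝ}
    (hR : R ∈ Ioo 0 1) : DiffContOnCl ℂ (fun ζ => f (R * ζ)) (ball 0 1) :=
  hf.comp (g := fun ζ : ℂ => (R : ℂ) * ζ) (Differentiable.diffContOnCl (by fun_prop)) fun ζ hζ => by
    rw [mem_ball_zero_iff] at hζ ⊢
    rw [norm_mul, Complex.norm_of_nonneg hR.1.le]
    exact (mul_le_of_le_one_left (norm_nonneg ζ) hR.2.le).trans_lt hζ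

theorem eventually_dist_add_inv_pow_smul_lt {f : ℂ → E} (hf : ContinuousOn f (closedBall 0 1))
    {G H : ℂ → ℂ → E} (hG : ContinuousOn (uncurry G) (univ ×ˢ closedBall 0 1)) {m : ℕ} {δ : ℝ}
    (hδ : 0 < δ)
    (hGH : ∀ ζ ∈ sphere (0 : ℂ) 1, ∀ η ∈ closedBall (0 : ℂ) 1,
      ‖G ζ η - ζ ^ m • (H ζ η - f ζ)‖ < δ / 2) :
    ∀ᶠ R in 𝓝[<] (1 : ℝ), ∀ ζ ∈ closedBall (0 : ℂ) 1, R ≤ ‖ζ‖ → ∀ η ∈ closedBall (0 : ℂ) 1,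
      dist (f ζ + (ζ ^ m)⁻¹ • G ζ η) (H (‖ζ‖⁻¹ • ζ) η) < δ := by
  let A : Set ℂ := closedBall 0 1 \ ball 0 (1 / 2)
  let Φ : ℂ → ℂ → E := fun ζ η => f ζ + (ζ ^ m)⁻¹ • G ζ η
  have hA : ∀ z ∈ A ×ˢ closedBall (0 : ℂ) 1, z.1 ^ m ≠ 0 := fun z hz =>
    pow_ne_zero m fun h => hz.1.2 (by simp [h])
  have hΦ : ContinuousOn (uncurry Φ) (A ×ˢ closedBall 0 1) :=
    (hf.comp continuousOn_fst fun z hz => hz.1.1).add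
      ((ContinuousOn.inv₀ (by fun_prop) hA).smul (hG.mono fun z hz => ⟨trivial, hz.2⟩))
  have hcpt : IsCompact (A ×ˢ closedBall (0 : ℂ) 1) :=
    ((isCompact_closedBall 0 1).diff isOpen_ball).prod (isCompact_closedBall 0 1)
  filter_upwards [eventually_forall_dist_inv_norm_smul_lt (by norm_num)
    (hcpt.uniformContinuousOn_of_continuous hΦ) (half_pos hδ),
    Ioo_mem_nhdsLT zero_lt_one] with R hR ⟨hR₀, _⟩ ζ hζ hRζ η hη
  have hω : ‖‖ζ‖⁻¹ • ζ‖ = 1 := by simp [(hR₀.trans_le hRζ).ne']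
  set ω : ℂ := ‖ζ‖⁻¹ • ζ
  have hωm : ω ^ m ≠ 0 := pow_ne_zero m (norm_pos_iff.1 (hω ▸ one_pos))
  have hΦH : dist (Φ ω η) (H ω η) < δ / 2 :=
    calc dist (Φ ω η) (H ω η) = ‖(ω ^ m)⁻¹ • (G ω η - ω ^ m • (H ω η - f ω))‖ := by
          rw [dist_eq_norm, smul_sub, inv_smul_smul₀ hωm]
          congr 1
          simp only [Φ]
          abel
      _ = ‖G ω η - ω ^ m • (H ω η - f ω)‖ := by simp [norm_smul, hω]
      _ < δ / 2 := hGH ω (mem_sphere_zero_iff_norm.2 hω) η hη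
  linarith [dist_triangle (Φ ζ η) (Φ ω η) (H ω η), hR ζ hζ hRζ η hη]

theorem eventually_exists_correction {f : ℂ → E} (hf : ContinuousOn f (closedBall 0 1))
    {H : ℂ → ℂ → E} (hc : ContinuousOn (uncurry H) (sphere 0 1 ×ˢ closedBall 0 1))
    (hd : ∀ ζ ∈ sphere (0 : ℂ) 1, DifferentiableOn ℂ (H ζ) (ball 0 1))
    (h₀ : ∀ ζ ∈ sphere (0 : ℂ) 1, H ζ 0 = f ζ) {δ : ℝ} (hδ : 0 < δ) :
    ∀ᶠ R in 𝓝[<] (1 : ℝ), ∃ (v : ℂ → E) (N : ℕ), DiffContOnCl ℂ v (ball 0 1) ∧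
      v 0 = 0 ∧ HasDerivAt v 0 0 ∧ (∀ ζ ∈ closedBall (0 : ℂ) R, ‖v ζ‖ < δ) ∧
      ∀ ζ ∈ closedBall (0 : ℂ) 1, R ≤ ‖ζ‖ → dist (f ζ + v ζ) (H (‖ζ‖⁻¹ • ζ) (ζ ^ N)) < δ := by
  obtain ⟨m, G, C, hG, hGC, hGH⟩ := exists_holomorphic_norm_sub_pow_smul_lt
    (h := fun ζ η => H ζ η - f ζ)
    (hc.sub (hf.comp continuousOn_fst fun z hz => sphere_subset_closedBall hz.1))
    (fun ζ hζ => (hd ζ hζ).sub_const (f ζ)) (fun ζ hζ => sub_eq_zero.2 (h₀ ζ hζ)) (half_pos hδ)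
  have hGc : ContinuousOn (uncurry G) (univ ×ˢ closedBall 0 1) := by
    simpa only [closure_prod_eq, closure_univ, closure_ball (0 : ℂ) one_ne_zero] using
      hG.continuousOn
  have hC : 0 ≤ C := by simpa using (norm_nonneg _).trans (hGC 0 (by simp) 1 (by simp))
  filter_upwards [eventually_dist_add_inv_pow_smul_lt hf hGc hδ hGH,
    Ioo_mem_nhdsLT zero_lt_one] with R hRH ⟨hR₀, hR₁⟩
  obtain ⟨k, hk, hkC⟩ : ∃ k : ℕ, 1 < k ∧ C * R ^ k < δ := by
    have hlim : Tendsto (fun k : ℕ => C * R ^ k) atTop (𝓝 0) := by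
      simpa using (tendsto_pow_atTop_nhds_zero_of_lt_one hR₀.le hR₁).const_mul C
    exact ((eventually_gt_atTop 1).and (hlim.eventually_lt_const hδ)).exists
  have hv : ∀ ζ ∈ closedBall (0 : ℂ) 1, ‖boundaryCorrection G m k ζ‖ ≤ C * ‖ζ‖ ^ k :=
    fun ζ => boundaryCorrection.norm_le hGC (by omega)
  have hv' := boundaryCorrection.hasDerivAt_zero (m := m) hGC hk
  refine ⟨boundaryCorrection G m k, m + k,
    boundaryCorrection.diffContOnCl hG hv'.differentiableAt (by omega), ?_, hv',
    fun ζ hζ => ?_, fun ζ hζ hRζ => ?_⟩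
  · simpa [show k ≠ 0 by omega] using hv 0 (by simp)
  · have hζR : ‖ζ‖ ≤ R := mem_closedBall_zero_iff.1 hζ
    calc ‖boundaryCorrection G m k ζ‖ ≤ C * ‖ζ‖ ^ k := hv ζ (closedBall_subset_closedBall hR₁.le hζ)
      _ ≤ C * R ^ k := by gcongr
      _ < δ := hkC
  · exact hRH ζ hζ hRζ _ ((Submonoid.unitClosedBall ℂ).pow_mem hζ (m + k))

theorem exists_disc_approx_attached_discs {f : ℂ → E} (hf : DiffContOnCl ℂ f (ball 0 1))
    {H : ℂ → ℂ → E} (hc : ContinuousOn (uncurry H) (sphere 0 1 ×ˢ closedBall 0 1))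
    (hd : ∀ ζ ∈ sphere (0 : ℂ) 1, DifferentiableOn ℂ (H ζ) (ball 0 1))
    (h₀ : ∀ ζ ∈ sphere (0 : ℂ) 1, H ζ 0 = f ζ) {r : ℝ} (hr : r < 1) {δ : ℝ} (hδ : 0 < δ) :
    ∃ (g : ℂ → E) (R : ℝ) (N : ℕ), 0 < R ∧ r < R ∧ R < 1 ∧ DiffContOnCl ℂ g (ball 0 1) ∧
      g 0 = f 0 ∧ deriv g 0 = R • deriv f 0 ∧
      (∀ ζ ∈ closedBall (0 : ℂ) R, dist (g ζ) (f ζ) < δ) ∧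
      ∀ ζ ∈ closedBall (0 : ℂ) 1, R ≤ ‖ζ‖ → dist (g ζ) (H (‖ζ‖⁻¹ • ζ) (ζ ^ N)) < δ := by
  have hfc : ContinuousOn f (closedBall 0 1) := hf.continuousOn_ball
  have hdilation := eventually_forall_dist_smul_lt
    ((isCompact_closedBall 0 1).uniformContinuousOn_of_continuous hfc) (half_pos hδ)
  have hcorrection := eventually_exists_correction hfc hc hd h₀ (half_pos hδ)
  obtain ⟨R, ⟨hfR, v, N, hv, hv₀, hv', hv_small, hvH⟩, hR, hRr⟩ := ((hdilation.and hcorrection).and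
    (inter_mem (Ioo_mem_nhdsLT zero_lt_one) (Ioo_mem_nhdsLT hr))).exists
  simp only [Complex.real_smul] at hfR
  have hfR' := diffContOnCl_comp_ofReal_mul hf hR
  refine ⟨fun ζ => f (R * ζ) + v ζ, R, N, hR.1, hRr.1, hR.2, hfR'.add hv, by simp [hv₀], ?_,
    fun ζ hζ => ?_, fun ζ hζ hRζ => ?_⟩
  · rw [deriv_fun_add (hfR'.differentiableAt' (ball_mem_nhds 0 one_pos)) hv'.differentiableAt,
      deriv_comp_mul_left, hv'.deriv, mul_zero, add_zero, Complex.coe_smul]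
  · calc dist (f (R * ζ) + v ζ) (f ζ) ≤ dist (f (R * ζ)) (f ζ) + ‖v ζ‖ := by
          simpa using dist_add_add_le (f (R * ζ)) (v ζ) (f ζ) 0
      _ < δ := by
          linarith [hfR ζ (closedBall_subset_closedBall hR.2.le hζ), hv_small ζ hζ]
  · calc dist (f (R * ζ) + v ζ) (H (‖ζ‖⁻¹ • ζ) (ζ ^ N))
        ≤ dist (f (R * ζ) + v ζ) (f ζ + v ζ) + dist (f ζ + v ζ) (H (‖ζ‖⁻¹ • ζ) (ζ ^ N)) :=
          dist_triangle _ _ _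
      _ < δ := by
          rw [dist_add_right]
          linarith [hfR ζ hζ, hvH ζ hζ hRζ]

theorem eventually_forall_ball_subset {α Y : Type*} [TopologicalSpace α] [PseudoMetricSpace Y]
    {s : Set α} (hs : IsCompact s) {F : α → Y} (hF : ContinuousOn F s) {U : Set Y} (hU : IsOpen U)
    (hFU : MapsTo F s U) : ∀ᶠ δ in 𝓝[>] (0 : ℝ), ∀ x ∈ s, ball (F x) δ ⊆ U := by
  obtain ⟨τ, hτ, hτU⟩ :=
    (hs.image_of_continuousOn hF).exists_thickening_subset_open hU hFU.image_subset
  filter_upwards [Ioo_mem_nhdsGT hτ] with δ hδ x hx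
  exact (ball_subset_thickening (mem_image_of_mem F hx) δ).trans
    ((thickening_mono hδ.2.le _).trans hτU)

theorem attached_disc_notMem {α : Type*} {Ω Ω₀ K : Set α} {f : ℂ → α} {H : ℂ → ℂ → α} {r : ℝ}
    (hr : r < 1) (hKΩ : K ∩ Ω = ∅) (hKf : K ∩ f '' (closedBall (0 : ℂ) 1 \ ball 0 r) = ∅)
    (hout : ∀ ζ ∈ sphere (0 : ℂ) 1, f ζ ∉ Ω₀ → ∀ η ∈ closedBall (0 : ℂ) 1, H ζ η = f ζ)
    (hin : ∀ ζ ∈ sphere (0 : ℂ) 1, f ζ ∈ Ω₀ → ∀ η ∈ closedBall (0 : ℂ) 1, H ζ η ∈ Ω) :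
    ∀ ζ ∈ sphere (0 : ℂ) 1, ∀ η ∈ closedBall (0 : ℂ) 1, H ζ η ∉ K := by
  intro ζ hζ η hη hHK
  by_cases hζΩ₀ : f ζ ∈ Ω₀
  · exact hKΩ.le ⟨hHK, hin ζ hζ hζΩ₀ η hη⟩
  · rw [hout ζ hζ hζΩ₀ η hη] at hHK
    have hζr : ζ ∉ ball 0 r := by simpa [mem_sphere_zero_iff_norm.1 hζ] using hr.le
    exact hKf.le ⟨hHK, mem_image_of_mem f ⟨sphere_subset_closedBall hζ, hζr⟩⟩

theorem main_lemma_lift_general {X K : Set E} (hX : IsOpen X) (hK : IsClosed K) {f : ℂ → E}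
    (hf : DiffContOnCl ℂ f (ball 0 1)) (hfX : ∀ ζ ∈ closedBall (0 : ℂ) 1, f ζ ∈ X) {r : ℝ}
    (hr : r < 1) (hKf : K ∩ f '' (closedBall (0 : ℂ) 1 \ ball (0 : ℂ) r) = ∅) {H : ℂ → ℂ → E}
    (hc : ContinuousOn (uncurry H) (sphere 0 1 ×ˢ closedBall 0 1))
    (hHX : ∀ ζ ∈ sphere (0 : ℂ) 1, ∀ η ∈ closedBall (0 : ℂ) 1, H ζ η ∈ X)
    (hHK : ∀ ζ ∈ sphere (0 : ℂ) 1, ∀ η ∈ closedBall (0 : ℂ) 1, H ζ η ∉ K)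
    (hd : ∀ ζ ∈ sphere (0 : ℂ) 1, DifferentiableOn ℂ (H ζ) (ball 0 1))
    (h₀ : ∀ ζ ∈ sphere (0 : ℂ) 1, H ζ 0 = f ζ) {ε : ℝ} (hε : 0 < ε) :
    ∃ (g : ℂ → E) (R : ℝ),
      ContinuousOn g (closedBall (0 : ℂ) 1) ∧
      DifferentiableOn ℂ g (ball (0 : ℂ) 1) ∧
      (∀ ζ ∈ closedBall (0 : ℂ) 1, g ζ ∈ X) ∧
      (∀ ζ ∈ sphere (0 : ℂ) 1, infDist (g ζ) (H ζ '' sphere (0 : ℂ) 1) < ε) ∧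
      (∀ ζ ∈ closedBall (0 : ℂ) r, dist (g ζ) (f ζ) < ε) ∧
      (g '' (closedBall (0 : ℂ) 1 \ ball (0 : ℂ) r)) ∩ K = ∅ ∧
      g 0 = f 0 ∧
      r < R ∧ R < 1 ∧ deriv g 0 = R • deriv f 0 := by
  have hDcpt : IsCompact (closedBall (0 : ℂ) 1) := isCompact_closedBall 0 1
  have hfc : ContinuousOn f (closedBall 0 1) := hf.continuousOn_ball
  have hfK : ∀ ζ ∈ closedBall (0 : ℂ) 1 \ ball 0 r, f ζ ∈ Kᶜ := fun ζ hζ hζK =>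
    hKf.le ⟨hζK, mem_image_of_mem f hζ⟩
  have hf_near := eventually_forall_ball_subset hDcpt hfc hX hfX
  have hf_far := eventually_forall_ball_subset (hDcpt.diff isOpen_ball) (hfc.mono sdiff_subset)
    hK.isOpen_compl hfK
  have hH_near := eventually_forall_ball_subset ((isCompact_sphere 0 1).prod hDcpt) hc
    (hX.sdiff hK) fun z hz => ⟨hHX _ hz.1 _ hz.2, hHK _ hz.1 _ hz.2⟩
  obtain ⟨δ, ⟨hδX, hδK, hδH⟩, hδ, hδε⟩ :=
    ((hf_near.and (hf_far.and hH_near)).and (Ioo_mem_nhdsGT hε)).exists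
  obtain ⟨g, R, N, hR₀, hrR, hR₁, hg, hg₀, hg', hgf, hgH⟩ :=
    exists_disc_approx_attached_discs hf hc hd h₀ hr hδ
  have hg_inner : ∀ ζ : ℂ, ‖ζ‖ ≤ R → dist (g ζ) (f ζ) < δ := fun ζ hζ =>
    hgf ζ (mem_closedBall_zero_iff.2 hζ)
  have hg_outer : ∀ ζ ∈ closedBall (0 : ℂ) 1, R ≤ ‖ζ‖ → g ζ ∈ X \ K := fun ζ hζ hRζ => by
    have hζ₀ : ζ ≠ 0 := norm_pos_iff.1 (hR₀.trans_le hRζ)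
    exact hδH (‖ζ‖⁻¹ • ζ, ζ ^ N) ⟨by simp [hζ₀], (Submonoid.unitClosedBall ℂ).pow_mem hζ N⟩
      (hgH ζ hζ hRζ)
  refine ⟨g, R, hg.continuousOn_ball, hg.differentiableOn, fun ζ hζ => ?_, fun ζ hζ => ?_,
    fun ζ hζ => (hgf ζ (closedBall_subset_closedBall hrR.le hζ)).trans hδε, ?_, hg₀, hrR, hR₁, hg'⟩
  · rcases le_total ‖ζ‖ R with hζR | hRζ
    · exact hδX ζ hζ (hg_inner ζ hζR)
    · exact (hg_outer ζ hζ hRζ).1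
  · have hζ₁ : ‖ζ‖ = 1 := mem_sphere_zero_iff_norm.1 hζ
    have hgHζ := hgH ζ (sphere_subset_closedBall hζ) (hR₁.le.trans_eq hζ₁.symm)
    rw [hζ₁, inv_one, one_smul] at hgHζ
    have hmem : H ζ (ζ ^ N) ∈ H ζ '' sphere 0 1 := mem_image_of_mem _ (by simp [hζ₁])
    exact (infDist_le_dist_of_mem hmem).trans_lt (hgHζ.trans hδε)
  · rw [← disjoint_iff_inter_eq_empty, Set.disjoint_left]
    rintro _ ⟨ζ, hζ, rfl⟩
    rcases le_total ‖ζ‖ R with hζR | hRζ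
    · exact hδK ζ hζ (hg_inner ζ hζR)
    · exact (hg_outer ζ hζ.1 hRζ).2

end AttachedDiscs

/-- the paper's main Lemma 2.2, for domains `X ⊆ ℂⁿ` with the Euclidean
metric. Given a holomorphic disc `f` in `X` defined near the closed disc and a continuous
family `H` of holomorphic discs attached to the boundary of `f`, nonconstant only over
`Ω₀` and staying in the coordinate neighborhood `Ω`, one can find a new disc `g` whose
boundary is `ε`-close to the boundaries of the attached discs, which is `ε`-close to `f`
on `{|ζ| ≤ r}`, avoids `K` on `{r ≤ |ζ| ≤ 1}`, and has the same center with proportional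
derivative there. -/
theorem main_lemma_lift
    (n : ℕ) (hn : 2 ≤ n)
    (X : Set (EuclideanSpace ℂ (Fin n))) (hX : IsOpen X)
    (Ω : Set (EuclideanSpace ℂ (Fin n))) (hΩ : IsOpen Ω)
    (hΩ_cpt : IsCompact (closure Ω)) (hΩX : closure Ω ⊆ X)
    (Ω₀ : Set (EuclideanSpace ℂ (Fin n))) (hΩ₀ : IsOpen Ω₀)
    (hΩ₀_cpt : IsCompact (closure Ω₀)) (hΩ₀Ω : closure Ω₀ ⊆ Ω)
    (f : ℂ → EuclideanSpace ℂ (Fin n))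
    (W : Set ℂ) (hW : IsOpen W) (hWD : closedBall (0 : ℂ) 1 ⊆ W)
    (hf_hol : DifferentiableOn ℂ f W)
    (hf_mem : ∀ ζ ∈ W, f ζ ∈ X)
    (K : Set (EuclideanSpace ℂ (Fin n))) (hK : IsCompact K) (hKX : K ⊆ X)
    (r : ℝ) (hr0 : 0 < r) (hr1 : r < 1)
    (hKΩ : K ∩ Ω = ∅)
    (hKf : K ∩ f '' (closedBall (0 : ℂ) 1 \ ball (0 : ℂ) r) = ∅)
    (H : ℂ → ℂ → EuclideanSpace ℂ (Fin n))
    (hH_cont : ContinuousOn (fun p : ℂ × ℂ => H p.1 p.2)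
      (sphere (0 : ℂ) 1 ×ˢ closedBall (0 : ℂ) 1))
    (hH_mem : ∀ ζ ∈ sphere (0 : ℂ) 1, ∀ η ∈ closedBall (0 : ℂ) 1, H ζ η ∈ X)
    (hH_hol : ∀ ζ ∈ sphere (0 : ℂ) 1, DifferentiableOn ℂ (H ζ) (ball (0 : ℂ) 1))
    (hH_cen : ∀ ζ ∈ sphere (0 : ℂ) 1, H ζ 0 = f ζ)
    (hH_out : ∀ ζ ∈ sphere (0 : ℂ) 1, f ζ ∉ Ω₀ →
      ∀ η ∈ closedBall (0 : ℂ) 1, H ζ η = f ζ)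
    (hH_in : ∀ ζ ∈ sphere (0 : ℂ) 1, f ζ ∈ Ω₀ →
      ∀ η ∈ closedBall (0 : ℂ) 1, H ζ η ∈ Ω)
    (ε : ℝ) (hε : 0 < ε) :
    ∃ (g : ℂ → EuclideanSpace ℂ (Fin n)) (R : ℝ),
      ContinuousOn g (closedBall (0 : ℂ) 1) ∧
      DifferentiableOn ℂ g (ball (0 : ℂ) 1) ∧
      (∀ ζ ∈ closedBall (0 : ℂ) 1, g ζ ∈ X) ∧
      (∀ ζ ∈ sphere (0 : ℂ) 1, infDist (g ζ) (H ζ '' sphere (0 : ℂ) 1) < ε) ∧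
      (∀ ζ ∈ closedBall (0 : ℂ) r, dist (g ζ) (f ζ) < ε) ∧
      (g '' (closedBall (0 : ℂ) 1 \ ball (0 : ℂ) r)) ∩ K = ∅ ∧
      g 0 = f 0 ∧
      r < R ∧ R < 1 ∧ deriv g 0 = R • deriv f 0 :=
  main_lemma_lift_general hX hK.isClosed (hf_hol.diffContOnCl_ball hWD)
    (fun ζ hζ => hf_mem ζ (hWD hζ)) hr1 hKf hH_cont hH_mem
    (attached_disc_notMem hr1 hKΩ hKf hH_out hH_in) hH_hol hH_cen hε
end

section
/- Let n ≥ 2 and let X ⊆ ℂ^n be an open set, with d the Euclidean distance on ℂ^n. Let A, B ⊆ X be open sets with compact closures contained in X such that B is a convex 2-bump on A, and let K be a compact subset of A. Assume that f : 𝔻̄ → X is a continuous map, holomorphic on 𝔻, such that f(b𝔻) ∩ cl(A) = ∅, and let r with 0 < r < 1 be such that f(𝔻̄ \ r𝔻) ∩ K = ∅. Then for every ε > 0 there is a continuous map g : 𝔻̄ → X, holomorphic on 𝔻, with the following properties: (i) g(b𝔻) ∩ cl(A ∪ B) = ∅; (ii) d(g(ζ), f(ζ)) < ε for all |ζ| ≤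 r; (iii) g(𝔻̄ \ r𝔻) ∩ K = ∅; (iv) g(0) = f(0); (v) g′(0) = R·f′(0) for some R with r < R < 1. -/
open Metric

/-- `B` is a convex 2-bump on `A` (inside the open set `X ⊆ ℂⁿ`, `n ≥ 2`): there are an
open set `Ω ⊆ X` containing `cl(B)`, a biholomorphism `Φ` from `Ω` onto a convex open set
`ω ⊆ ℂⁿ`, and smooth functions `ρ_B ≤ ρ_A` on `ω` with
`Φ(A ∩ Ω) = {ρ_A < 0}`, `Φ((A ∪ B) ∩ Ω) = {ρ_B < 0}`, whose real Hessians are positive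
definite on the (real 4-dimensional) subspace spanned by `e₁, i e₁, e₂, i e₂`
(i.e. the complex span of `e₁, e₂`), and such that `d(tρ_A + (1-t)ρ_B)` is nonzero on
that subspace for every `t ∈ [0,1]` at every point of `ω`. -/
def IsConvexTwoBump (n : ℕ) (hn : 2 ≤ n)
    (X A B : Set (EuclideanSpace ℂ (Fin n))) : Prop :=
  ∃ (Ω ω : Set (EuclideanSpace ℂ (Fin n)))
    (Φ Ψ : EuclideanSpace ℂ (Fin n) → EuclideanSpace ℂ (Fin n))
    (ρA ρB : EuclideanSpace ℂ (Fin n) → ℝ),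
    IsOpen Ω ∧ Ω ⊆ X ∧ closure B ⊆ Ω ∧
    IsOpen ω ∧ Convex ℝ ω ∧
    DifferentiableOn ℂ Φ Ω ∧ DifferentiableOn ℂ Ψ ω ∧
    Φ '' Ω = ω ∧ (∀ z ∈ Ω, Ψ (Φ z) = z) ∧ (∀ w ∈ ω, Φ (Ψ w) = w) ∧
    ContDiffOn ℝ (⊤ : ℕ∞) ρA ω ∧ ContDiffOn ℝ (⊤ : ℕ∞) ρB ω ∧
    (∀ z ∈ ω, ρB z ≤ ρA z) ∧
    Φ '' (A ∩ Ω) = {z ∈ ω | ρA z < 0} ∧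
    Φ '' ((A ∪ B) ∩ Ω) = {z ∈ ω | ρB z < 0} ∧
    (∀ z ∈ ω, ∀ w ∈ Submodule.span ℂ
        {EuclideanSpace.single (⟨0, by omega⟩ : Fin n) (1 : ℂ),
         EuclideanSpace.single (⟨1, by omega⟩ : Fin n) (1 : ℂ)}, w ≠ 0 →
      0 < fderiv ℝ (fderiv ℝ ρA) z w w ∧ 0 < fderiv ℝ (fderiv ℝ ρB) z w w) ∧
    (∀ t ∈ Set.Icc (0 : ℝ) 1, ∀ z ∈ ω, ∃ w ∈ Submodule.span ℂ
        {EuclideanSpace.single (⟨0, by omega⟩ : Fin n) (1 : ℂ),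
         EuclideanSpace.single (⟨1, by omega⟩ : Fin n) (1 : ℂ)},
      t * fderiv ℝ ρA z w + (1 - t) * fderiv ℝ ρB z w ≠ 0)

/-!
Read `t ρ_A + (1 - t) ρ_B` in the chart `Φ`. Its sublevel sets at level zero grow from `cl(A)` to
`cl(A ∪ B)` as `t` decreases from `1` to `0`, and it suffices to push the boundary of the disc
across a short step `t' < t` of this family. Since the differential of the function is nonzero on
the span of `e₁` and `e₂`, that span contains a complex direction tangent to the level set, and it
varies continuously with the point. Along the complex line in this direction the function is
strictly convex with a critical point at the center. So the discs of a fixed radius in these lines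
start outside the sublevel set, stay outside, and leave it by a uniform amount on their boundaries,
which pays for the passage from `t` to `t'`. Cutting the discs off away from `cl(B)` gives a family
`P x` defined on all of `X`.

The disc `f` is then replaced by an approximate solution of the Riemann-Hilbert problem for the
discs `P (f ζ)`, `|ζ| = 1`. Up to a small error, `P (f ζ) η` has the form
`f ζ + ζ ^ (-M) η h(ζ, η)` with `h` entire, and `ζ ↦ f ζ + ζ ^ k h(ζ, ζ ^ (k + M))` works for large
`k`: it is close to the boundary of the disc `P (f ζ)` when `|ζ| = 1`, close to the disc itself when
`|ζ|` is near `1`, and close to `f` elsewhere, with the same value and derivative at the center.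
The discs constructed this way meet `K ⊆ A` only where they are close to `f`. Finally, composing
with `ζ ↦ R ζ` is harmless for `R` close to `1`.
-/

open Set Filter Topology

section Approximation

/-- The vector-valued Laurent monomial `ζ ↦ ζ ^ n • v` on the unit circle. -/
noncomputable def laurentMonomial {E : Type*} [NormedAddCommGroup E] [NormedSpace ℂ E] (n : ℤ)
    (v : E) : C(Circle, E) :=
  ⟨fun ζ => ζ ^ n • v, (continuous_zpow n).smul continuous_const⟩

open Classical in
theorem exists_finset_sum_smul_approx {X E : Type*} [TopologicalSpace X] [CompactSpace X]
    [T2Space X] [NormedAddCommGroup E] [NormedSpace ℝ E] (a : C(X, E)) {P : Set E}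
    (ha : ∀ x, a x ∈ closure P) {ε : ℝ} (hε : 0 < ε) :
    ∃ (t : Finset X) (φ : X → C(X, ℝ)) (v : X → E), (∀ i, v i ∈ P) ∧
      ∀ x, dist (∑ i ∈ t, φ i x • v i) (a x) < ε := by
  choose v hvP hv using fun x => Metric.mem_closure_iff.1 (ha x) ε hε
  let W (i : X) : Set X := {x | dist (a x) (v i) < ε}
  have hW (i : X) : IsOpen (W i) := isOpen_lt (by fun_prop) continuous_const
  obtain ⟨t, ht⟩ := CompactSpace.elim_nhds_subcover W fun i => (hW i).mem_nhds (hv i)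
  obtain ⟨φ, hφ⟩ := PartitionOfUnity.exists_isSubordinate isClosed_univ (fun i : t => W i)
    (fun i => hW i) (by rw [iUnion_subtype]; exact ht.ge)
  refine ⟨t, fun i => if h : i ∈ t then φ ⟨i, h⟩ else 0, v, hvP, fun x => ?_⟩
  have hmem : ∑ᶠ i, φ i x • v i ∈ ball (a x) ε :=
    φ.finsum_smul_mem_convex (g := fun i _ => v i) (mem_univ x)
      (fun i hi => mem_ball'.2 (hφ i (subset_closure hi))) (convex_ball _ _)
  rw [finsum_eq_sum_of_fintype, Finset.univ_eq_attach] at hmem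
  rw [← Finset.sum_attach]
  simpa using hmem

variable {E : Type*} [NormedAddCommGroup E] [NormedSpace ℂ E]

theorem smul_const_mem_closure_span_laurentMonomial (φ : C(Circle, ℂ)) (v : E) :
    (ContinuousLinearMap.toSpanSingleton ℂ v).compLeftContinuous ℂ Circle φ ∈
      (Submodule.span ℂ (range (laurentMonomial · v))).topologicalClosure := by
  have : Fact (0 < (1 : ℝ)) := ⟨one_pos⟩
  let e := AddCircle.homeomorphCircle (T := (1 : ℝ)) one_ne_zero
  let T := ((ContinuousLinearMap.toSpanSingleton ℂ v).compLeftContinuous ℂ Circle).toLinearMap ∘ₗ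
    (ContinuousMap.compRightAlgHom ℂ ℂ (e.symm : C(Circle, AddCircle (1 : ℝ)))).toLinearMap
  have hT : Continuous T :=
    ((ContinuousLinearMap.toSpanSingleton ℂ v).compLeftContinuous ℂ Circle).continuous.comp
      (ContinuousMap.compRightAlgHom_continuous ℂ ℂ _)
  have hφ : T (φ.comp e) =
      (ContinuousLinearMap.toSpanSingleton ℂ v).compLeftContinuous ℂ Circle φ := by
    ext ζ
    simp [T]
  have hspan : Submodule.span ℂ (range (fourier (T := (1 : ℝ)))) ≤
      (Submodule.span ℂ (range (laurentMonomial · v))).comap T := by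
    rw [Submodule.span_le]
    rintro _ ⟨n, rfl⟩
    refine Submodule.subset_span ⟨n, ?_⟩
    ext ζ
    have hζ : (e.symm ζ).toCircle = ζ := by
      rw [← AddCircle.homeomorphCircle_apply one_ne_zero, e.apply_symm_apply]
    change ζ ^ n • v = (((n • e.symm ζ).toCircle : Circle) : ℂ) • v
    rw [AddCircle.toCircle_zsmul, hζ, Circle.smul_def]
  rw [← hφ]
  exact map_mem_closure hT (span_fourier_closure_eq_top.ge trivial) hspan

theorem mem_closure_span_laurentMonomial (a : C(Circle, E)) {P : Set E}
    (ha : ∀ ζ, a ζ ∈ closure P) :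
    a ∈ (Submodule.span ℂ (image2 laurentMonomial univ P)).topologicalClosure := by
  refine isClosed_closure.closure_subset (Metric.mem_closure_iff.2 fun ε hε => ?_)
  obtain ⟨t, φ, v, hvP, hφ⟩ := exists_finset_sum_smul_approx a ha hε
  refine ⟨∑ i ∈ t, (ContinuousLinearMap.toSpanSingleton ℂ (v i)).compLeftContinuous ℂ Circle
    ((⟨_, Complex.continuous_ofReal⟩ : C(ℝ, ℂ)).comp (φ i)), ?_, ?_⟩
  · refine Submodule.sum_mem _ fun i _ => Submodule.topologicalClosure_mono (Submodule.span_mono ?_)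
      (smul_const_mem_closure_span_laurentMonomial _ _)
    rintro _ ⟨n, rfl⟩
    exact mem_image2_of_mem trivial (hvP i)
  · rw [dist_comm, ContinuousMap.dist_lt_iff hε]
    simpa using hφ

theorem ofReal_mul_mem_closedBall {s : ℝ} (hs : 0 ≤ s) {η : ℂ} (hη : η ∈ closedBall (0 : ℂ) 1) :
    s * η ∈ closedBall (0 : ℂ) s := by
  rw [mem_closedBall_zero_iff, norm_mul, Complex.norm_of_nonneg hs]
  exact mul_le_of_le_one_right hs (mem_closedBall_zero_iff.1 hη)

theorem eventually_dist_mul_lt {X : Type*} [PseudoMetricSpace X] {f : ℂ → X}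
    (hf : ContinuousOn f (closedBall 0 1)) {ε : ℝ} (hε : 0 < ε) :
    ∀ᶠ s : ℝ in 𝓝[<] 1, ∀ η ∈ closedBall (0 : ℂ) 1, dist (f (s * η)) (f η) < ε := by
  obtain ⟨δ, hδ, hfδ⟩ := Metric.uniformContinuousOn_iff.1
    ((isCompact_closedBall _ _).uniformContinuousOn_of_continuous hf) ε hε
  filter_upwards [Ioo_mem_nhdsLT (max_lt zero_lt_one (sub_lt_self 1 hδ))] with s hs η hη
  have hs' := max_lt_iff.1 hs.1
  have hsη := closedBall_subset_closedBall hs.2.le (ofReal_mul_mem_closedBall hs'.1.le hη)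
  refine hfδ _ hsη _ hη ?_
  calc dist (s * η) η = ‖(((1 - s : ℝ) : ℂ) * η)‖ := by
        rw [dist_comm, dist_eq_norm]; push_cast; ring_nf
    _ ≤ 1 - s := mem_closedBall_zero_iff.1 (ofReal_mul_mem_closedBall (by linarith [hs.2]) hη)
    _ < δ := by linarith

theorem exists_entire_approx_of_diffContOnCl [CompleteSpace E] {f : ℂ → E}
    (hf : DiffContOnCl ℂ f (ball 0 1)) {ε : ℝ} (hε : 0 < ε) :
    ∃ p : ℂ → E, Differentiable ℂ p ∧ ∀ η ∈ closedBall (0 : ℂ) 1, dist (f η) (p η) < ε := by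
  obtain ⟨s, hs, hs0, hs1⟩ := ((eventually_dist_mul_lt hf.continuousOn_ball (half_pos hε)).and
    (Ioo_mem_nhdsLT (zero_lt_one (α := ℝ)))).exists
  obtain ⟨s', hss', hs'1⟩ := exists_between hs1
  lift s' to NNReal using (hs0.trans hss').le
  obtain ⟨n, hn⟩ := (Metric.tendstoUniformlyOn_iff.1
    ((hf.hasFPowerSeriesOnBall (R := 1) one_pos).tendstoUniformlyOn (r' := s')
      (mod_cast hs'1)) (ε / 2) (half_pos hε)).exists
  refine ⟨fun η => (cauchyPowerSeries f 0 (1 : NNReal)).partialSum n (s * η), ?_, fun η hη => ?_⟩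
  · unfold FormalMultilinearSeries.partialSum
    simp only [FormalMultilinearSeries.apply_eq_pow_smul_coeff]
    fun_prop
  · have hsη := hn _ (closedBall_subset_ball hss' (ofReal_mul_mem_closedBall hs0.le hη))
    rw [zero_add] at hsη
    exact (dist_triangle_left _ _ _).trans_lt (by linarith [hs η hη])

/-- The restrictions of entire functions to the closed unit disc, as a set of continuous maps; they
are dense in the disc algebra. -/
def entireRestrictions (E : Type*) [NormedAddCommGroup E] [NormedSpace ℂ E] :
    Set C(closedBall (0 : ℂ) 1, E) :=
  {b | ∃ p : ℂ → E, Differentiable ℂ p ∧ ∀ η, b η = p η}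

theorem exists_entire_of_mem_span [CompleteSpace E] {b : C(Circle, C(closedBall (0 : ℂ) 1, E))}
    (hb : b ∈ Submodule.span ℂ (image2 laurentMonomial univ (entireRestrictions E))) :
    ∃ (M : ℕ) (h : ℂ × ℂ → E), Differentiable ℂ h ∧ ∀ (ζ : Circle) (η : closedBall (0 : ℂ) 1),
      (ζ : ℂ) ^ M • (b ζ η - b ζ ⟨0, by simp⟩) = (η : ℂ) • h (ζ, η) := by
  induction hb using Submodule.span_induction with
  | mem b hb =>
    obtain ⟨n, -, c, ⟨p, hp, hcp⟩, rfl⟩ := hb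
    have hslope : Differentiable ℂ (dslope p 0) := differentiableOn_univ.1
      ((Complex.differentiableOn_dslope univ_mem).2 hp.differentiableOn)
    refine ⟨n.natAbs, fun q => q.1 ^ (n + n.natAbs).toNat • dslope p 0 q.2, by fun_prop,
      fun ζ η => ?_⟩
    have hpow : (ζ : ℂ) ^ n.natAbs * (ζ : ℂ) ^ n = (ζ : ℂ) ^ (n + n.natAbs).toNat := by
      rw [← zpow_natCast, ← zpow_natCast, ← zpow_add₀ ζ.coe_ne_zero,
        Int.toNat_of_nonneg (by omega), add_comm]
    have hdiff : p η - p 0 = (η : ℂ) • dslope p 0 η := by simpa using (sub_smul_dslope p 0 η).symm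
    simp only [laurentMonomial, ContinuousMap.coe_mk, ContinuousMap.smul_apply, Circle.smul_def,
      Circle.coe_zpow, hcp, ← smul_sub, hdiff, smul_smul, ← hpow]
    congr 1
    ring
  | zero => exact ⟨0, 0, differentiable_const _, by simp⟩
  | add b c _ _ hb hc =>
    obtain ⟨M, h, hh, hbh⟩ := hb
    obtain ⟨N, k, hk, hck⟩ := hc
    refine ⟨M + N, fun q => q.1 ^ N • h q + q.1 ^ M • k q, by fun_prop, fun ζ η => ?_⟩
    rw [smul_add, smul_comm _ (_ ^ N), smul_comm _ (_ ^ M), ← hbh, ← hck, smul_smul, smul_smul,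
      ← pow_add, ← pow_add, add_comm N, ← smul_add, ContinuousMap.add_apply,
      ContinuousMap.add_apply, ContinuousMap.add_apply, add_sub_add_comm]
  | smul c b _ hb =>
    obtain ⟨M, h, hh, hbh⟩ := hb
    refine ⟨M, fun q => c • h q, by fun_prop, fun ζ η => ?_⟩
    rw [smul_comm, ← hbh, smul_comm c]
    simp only [ContinuousMap.smul_apply, smul_sub]

theorem exists_entire_approx_sub [CompleteSpace E] {F : Circle → ℂ → E}
    (hF : ContinuousOn (fun q : Circle × ℂ => F q.1 q.2) (univ ×ˢ closedBall 0 1))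
    (hol : ∀ ζ, DiffContOnCl ℂ (F ζ) (ball 0 1)) {ε : ℝ} (hε : 0 < ε) :
    ∃ (M : ℕ) (h : ℂ × ℂ → E), Differentiable ℂ h ∧
      ∀ ζ : Circle, ∀ η ∈ closedBall (0 : ℂ) 1,
        dist ((ζ : ℂ) ^ M • (F ζ η - F ζ 0)) (η • h (ζ, η)) < ε := by
  have : CompactSpace (closedBall (0 : ℂ) 1) :=
    isCompact_iff_compactSpace.1 (isCompact_closedBall _ _)
  let b : C(Circle, C(closedBall (0 : ℂ) 1, E)) :=
    ContinuousMap.curry ⟨fun q => F q.1 q.2,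
      hF.comp_continuous (f := fun q : Circle × closedBall (0 : ℂ) 1 => (q.1, (q.2 : ℂ)))
        (by fun_prop) fun q => ⟨trivial, q.2.2⟩⟩
  have hb (ζ : Circle) : b ζ ∈ closure (entireRestrictions E) := by
    refine Metric.mem_closure_iff.2 fun ε hε => ?_
    obtain ⟨p, hp, hbp⟩ := exists_entire_approx_of_diffContOnCl (hol ζ) hε
    exact ⟨⟨fun η => p η, hp.continuous.comp continuous_subtype_val⟩, ⟨p, hp, fun _ => rfl⟩,
      (ContinuousMap.dist_lt_iff hε).2 fun η => hbp η η.2⟩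
  obtain ⟨c, hc, hbc⟩ :=
    Metric.mem_closure_iff.1 (mem_closure_span_laurentMonomial b hb) (ε / 2) (half_pos hε)
  obtain ⟨M, h, hh, hch⟩ := exists_entire_of_mem_span hc
  have hbc' (ζ : Circle) (η : closedBall (0 : ℂ) 1) : dist (b ζ η) (c ζ η) < ε / 2 :=
    (ContinuousMap.dist_apply_le_dist (f := b ζ) _).trans_lt
      ((ContinuousMap.dist_apply_le_dist ζ).trans_lt hbc)
  refine ⟨M, h, hh, fun ζ η hη => ?_⟩
  rw [← hch ζ ⟨η, hη⟩, dist_smul₀, norm_pow, Circle.norm_coe, one_pow, one_mul]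
  exact (dist_sub_sub_le _ _ _ _).trans_lt
    ((add_lt_add (hbc' ζ ⟨η, hη⟩) (hbc' ζ ⟨0, by simp⟩)).trans_eq (add_halves ε))

theorem exists_dist_lt_imp_mem {α β : Type*} [TopologicalSpace α] [PseudoMetricSpace β]
    {s : Set α} (hs : IsCompact s) {f : α → β} (hf : ContinuousOn f s) {U : Set β} (hU : IsOpen U)
    (hfU : MapsTo f s U) : ∃ δ > 0, ∀ x ∈ s, ∀ y, dist y (f x) < δ → y ∈ U := by
  obtain ⟨δ, hδ, hδU⟩ :=
    (hs.image_of_continuousOn hf).exists_thickening_subset_open hU hfU.image_subset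
  exact ⟨δ, hδ, fun x hx y hy => hδU (mem_thickening_iff.2 ⟨f x, mem_image_of_mem f hx, hy⟩)⟩

theorem exists_lt_forall_lt_imp_mem {α β : Type*} [TopologicalSpace α] [TopologicalSpace β]
    [T2Space α] {s : Set α} (hs : IsCompact s) {f : α → β} (hf : ContinuousOn f s) {ν : α → ℝ}
    (hν : ContinuousOn ν s) {U : Set β} (hU : IsOpen U) {a : ℝ}
    (hfU : ∀ x ∈ s, a ≤ ν x → f x ∈ U) : ∃ b < a, ∀ x ∈ s, b < ν x → f x ∈ U := by
  have hbad : IsCompact (s ∩ f ⁻¹' Uᶜ) := hs.of_isClosed_subset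
    (hf.preimage_isClosed_of_isClosed hs.isClosed hU.isClosed_compl) inter_subset_left
  obtain ⟨b, hba, hb⟩ := IsCompact.exists_forall_le' (α := ℝᵒᵈ) hbad
    (f := OrderDual.toDual ∘ ν) (a := OrderDual.toDual a) (hν.mono inter_subset_left)
    fun x hx => lt_of_not_ge fun h => hx.2 (hfU x hx.1 h)
  exact ⟨b, hba, fun x hx hbx => by_contra fun h => (hb x ⟨hx, h⟩).not_gt hbx⟩

/-- `g` agrees with `f` to first order at the center and is `ε`-close to it on the disc of
radius `r`. -/
structure IsCentralPerturbation (r ε : ℝ) (f g : ℂ → E) : Prop where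
  dist_lt : ∀ ζ ∈ closedBall (0 : ℂ) r, dist (g ζ) (f ζ) < ε
  map_zero : g 0 = f 0
  deriv_zero : deriv g 0 = deriv f 0

theorem IsCentralPerturbation.refl {r ε : ℝ} (hε : 0 < ε) (f : ℂ → E) :
    IsCentralPerturbation r ε f f :=
  ⟨fun ζ _ => by rwa [dist_self], rfl, rfl⟩

theorem IsCentralPerturbation.mono {r ε δ : ℝ} {f g : ℂ → E}
    (hfg : IsCentralPerturbation r ε f g) (h : ε ≤ δ) : IsCentralPerturbation r δ f g :=
  ⟨fun ζ hζ => (hfg.dist_lt ζ hζ).trans_le h, hfg.map_zero, hfg.deriv_zero⟩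

theorem IsCentralPerturbation.trans {r ε δ : ℝ} {f g h : ℂ → E}
    (hfg : IsCentralPerturbation r ε f g) (hgh : IsCentralPerturbation r δ g h) :
    IsCentralPerturbation r (ε + δ) f h where
  dist_lt ζ hζ := by
    linarith [dist_triangle (h ζ) (g ζ) (f ζ), hfg.dist_lt ζ hζ, hgh.dist_lt ζ hζ]
  map_zero := hgh.map_zero.trans hfg.map_zero
  deriv_zero := hgh.deriv_zero.trans hfg.deriv_zero

/-- The meromorphic family of discs `η ↦ f ζ + ζ ^ (-M) • η • h (ζ, η)` centered at the points of
the disc `f`. -/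
noncomputable def meromorphicFamily (f : ℂ → E) (M : ℕ) (h : ℂ × ℂ → E) (q : ℂ × ℂ) : E :=
  f q.1 + (q.1 ^ M)⁻¹ • q.2 • h q

/-- The disc `ζ ↦ meromorphicFamily f M h (ζ, ζ ^ (k + M))`, in a form that is holomorphic at the
center as well. -/
def pushedDisc (f : ℂ → E) (M : ℕ) (h : ℂ × ℂ → E) (k : ℕ) (ζ : ℂ) : E :=
  f ζ + ζ ^ k • h (ζ, ζ ^ (k + M))

theorem pushedDisc_eq_meromorphicFamily (f : ℂ → E) (M : ℕ) (h : ℂ × ℂ → E) (k : ℕ) {ζ : ℂ}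
    (hζ : ζ ≠ 0) : pushedDisc f M h k ζ = meromorphicFamily f M h (ζ, ζ ^ (k + M)) := by
  simp only [pushedDisc, meromorphicFamily, smul_smul]
  rw [add_comm k M, pow_add, inv_mul_cancel_left₀ (pow_ne_zero M hζ)]

theorem pow_mem_closedBall_zero_one {ζ : ℂ} (hζ : ζ ∈ closedBall (0 : ℂ) 1) (k : ℕ) :
    ζ ^ k ∈ closedBall (0 : ℂ) 1 := by
  rw [mem_closedBall_zero_iff] at hζ ⊢
  exact (norm_pow ζ k).trans_le (pow_le_one₀ (norm_nonneg ζ) hζ)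

theorem differentiable_pow_smul_comp {h : ℂ × ℂ → E} (hh : Differentiable ℂ h) (M k : ℕ) :
    Differentiable ℂ fun ζ : ℂ => ζ ^ k • h (ζ, ζ ^ (k + M)) := by
  have : Differentiable ℂ fun ζ : ℂ => h (ζ, ζ ^ (k + M)) := hh.comp (by fun_prop)
  fun_prop

theorem diffContOnCl_pushedDisc {f : ℂ → E} (hf : DiffContOnCl ℂ f (ball 0 1)) (M : ℕ)
    {h : ℂ × ℂ → E} (hh : Differentiable ℂ h) (k : ℕ) :
    DiffContOnCl ℂ (pushedDisc f M h k) (ball 0 1) :=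
  hf.add (differentiable_pow_smul_comp hh M k).diffContOnCl

theorem deriv_pushedDisc_zero {f : ℂ → E} (hf : DifferentiableAt ℂ f 0) (M : ℕ)
    {h : ℂ × ℂ → E} (hh : Differentiable ℂ h) {k : ℕ} (hk : 2 ≤ k) :
    deriv (pushedDisc f M h k) 0 = deriv f 0 := by
  have hcomp : DifferentiableAt ℂ (fun ζ : ℂ => h (ζ, ζ ^ (k + M))) 0 :=
    (hh.comp (by fun_prop : Differentiable ℂ fun ζ : ℂ => (ζ, ζ ^ (k + M)))).differentiableAt
  have hcorr := (hasDerivAt_pow k (0 : ℂ)).smul hcomp.hasDerivAt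
  rw [zero_pow (by omega), zero_pow (by omega), mul_zero, zero_smul, zero_smul, add_zero] at hcorr
  exact (hf.hasDerivAt.add hcorr).deriv.trans (add_zero _)

theorem eventually_isCentralPerturbation_pushedDisc {f : ℂ → E} (hf : DifferentiableAt ℂ f 0)
    (M : ℕ) {h : ℂ × ℂ → E} (hh : Differentiable ℂ h) {s : ℝ} (hs0 : 0 ≤ s) (hs1 : s < 1) {ε : ℝ}
    (hε : 0 < ε) : ∀ᶠ k in atTop, IsCentralPerturbation s ε f (pushedDisc f M h k) := by
  obtain ⟨C, hC⟩ := ((isCompact_closedBall (0 : ℂ) 1).prod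
    (isCompact_closedBall (0 : ℂ) 1)).exists_bound_of_continuousOn hh.continuous.continuousOn
  have hlim : Tendsto (fun k : ℕ => s ^ k * C) atTop (𝓝 0) := by
    simpa using (tendsto_pow_atTop_nhds_zero_of_lt_one hs0 hs1).mul_const C
  filter_upwards [hlim.eventually_lt_const hε, eventually_ge_atTop 2] with k hkε hk
  refine ⟨fun ζ hζ => ?_, by simp [pushedDisc, show k ≠ 0 by omega],
    deriv_pushedDisc_zero hf M hh hk⟩
  have hζ1 := closedBall_subset_closedBall hs1.le hζ
  rw [mem_closedBall_zero_iff] at hζ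
  calc dist (pushedDisc f M h k ζ) (f ζ) = ‖ζ‖ ^ k * ‖h (ζ, ζ ^ (k + M))‖ := by
        rw [pushedDisc, dist_self_add_left, norm_smul, norm_pow]
    _ ≤ s ^ k * C := by
        gcongr
        exact hC _ ⟨hζ1, pow_mem_closedBall_zero_one hζ1 _⟩
    _ < ε := hkε

theorem exists_meromorphicFamily_mem [CompleteSpace E] {f : ℂ → E} {F : Circle → ℂ → E}
    (hF : ContinuousOn (fun q : Circle × ℂ => F q.1 q.2) (univ ×ˢ closedBall 0 1))
    (hol : ∀ ζ, DiffContOnCl ℂ (F ζ) (ball 0 1)) (hF0 : ∀ ζ : Circle, F ζ 0 = f ζ)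
    {U V : Set E} (hU : IsOpen U) (hV : IsOpen V) (hFU : ∀ ζ, MapsTo (F ζ) (closedBall 0 1) U)
    (hFV : ∀ ζ, MapsTo (F ζ) (sphere 0 1) V) :
    ∃ (M : ℕ) (h : ℂ × ℂ → E), Differentiable ℂ h ∧
      MapsTo (meromorphicFamily f M h) (sphere 0 1 ×ˢ closedBall 0 1) U ∧
      MapsTo (meromorphicFamily f M h) (sphere 0 1 ×ˢ sphere 0 1) V := by
  obtain ⟨δU, hδU, hUδ⟩ := exists_dist_lt_imp_mem
    (isCompact_univ.prod (isCompact_closedBall (0 : ℂ) 1)) hF hU fun q hq => hFU q.1 hq.2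
  obtain ⟨δV, hδV, hVδ⟩ := exists_dist_lt_imp_mem (isCompact_univ.prod (isCompact_sphere (0 : ℂ) 1))
    (hF.mono (prod_mono_right sphere_subset_closedBall)) hV fun q hq => hFV q.1 hq.2
  obtain ⟨M, h, hh, happ⟩ := exists_entire_approx_sub hF hol (lt_min hδU hδV)
  have hclose (ζ : Circle) {η : ℂ} (hη : η ∈ closedBall (0 : ℂ) 1) :
      dist (meromorphicFamily f M h (ζ, η)) (F ζ η) < min δU δV := by
    have heq : dist ((ζ : ℂ) ^ M • (F ζ η - F ζ 0)) (η • h (ζ, η)) =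
        dist (meromorphicFamily f M h (ζ, η)) (F ζ η) := by
      have hζ : (ζ : ℂ) ^ M ≠ 0 := pow_ne_zero M ζ.coe_ne_zero
      nth_rw 1 [← smul_inv_smul₀ hζ (η • h (ζ, η))]
      rw [dist_smul₀, norm_pow, Circle.norm_coe, one_pow, one_mul, hF0, dist_comm,
        meromorphicFamily, dist_eq_norm, dist_eq_norm]
      congr 1
      abel
    exact heq ▸ happ ζ η hη
  refine ⟨M, h, hh, fun q hq => ?_, fun q hq => ?_⟩
  · exact hUδ (⟨q.1, hq.1⟩, q.2) ⟨trivial, hq.2⟩ _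
      ((hclose ⟨q.1, hq.1⟩ hq.2).trans_le (min_le_left _ _))
  · exact hVδ (⟨q.1, hq.1⟩, q.2) ⟨trivial, hq.2⟩ _
      ((hclose ⟨q.1, hq.1⟩ (sphere_subset_closedBall hq.2)).trans_le (min_le_right _ _))

theorem exists_meromorphicFamily_mem_of_lt_norm {f : ℂ → E} (hf : ContinuousOn f (closedBall 0 1))
    {M : ℕ} {h : ℂ × ℂ → E} (hh : Continuous h) {U : Set E} (hU : IsOpen U)
    (hfU : MapsTo (meromorphicFamily f M h) (sphere 0 1 ×ˢ closedBall 0 1) U) :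
    ∃ s < 1, ∀ q ∈ closedBall (0 : ℂ) 1 ×ˢ closedBall (0 : ℂ) 1,
      s < ‖q.1‖ → meromorphicFamily f M h q ∈ U := by
  let T : Set (ℂ × ℂ) := (closedBall 0 1 \ ball 0 (1 / 2)) ×ˢ closedBall 0 1
  have hT : IsCompact T :=
    ((isCompact_closedBall _ _).diff isOpen_ball).prod (isCompact_closedBall _ _)
  have hcont : ContinuousOn (meromorphicFamily f M h) T := by
    have hfc : ContinuousOn (fun q : ℂ × ℂ => f q.1) T :=
      hf.comp continuousOn_fst fun q hq => hq.1.1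
    have hinv : ContinuousOn (fun q : ℂ × ℂ => (q.1 ^ M)⁻¹) T :=
      ContinuousOn.inv₀ (by fun_prop) fun q hq => pow_ne_zero _ fun h0 => hq.1.2 (by simp [h0])
    exact hfc.add (hinv.smul (continuousOn_snd.smul hh.continuousOn))
  obtain ⟨s, hs1, hs⟩ := exists_lt_forall_lt_imp_mem hT hcont (ν := fun q => ‖q.1‖) (by fun_prop) hU
    (a := 1) fun q hq hq1 => hfU
      ⟨mem_sphere_zero_iff_norm.2 ((mem_closedBall_zero_iff.1 hq.1.1).antisymm hq1), hq.2⟩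
  refine ⟨max s (1 / 2), max_lt hs1 (by norm_num), fun q hq hqs => hs q ⟨⟨hq.1, ?_⟩, hq.2⟩ ?_⟩
  · simpa using (le_max_right _ _).trans hqs.le
  · exact (le_max_left _ _).trans_lt hqs

theorem exists_riemannHilbert_approx [CompleteSpace E] {f : ℂ → E}
    (hf : DiffContOnCl ℂ f (ball 0 1)) {F : Circle → ℂ → E}
    (hF : ContinuousOn (fun q : Circle × ℂ => F q.1 q.2) (univ ×ˢ closedBall 0 1))
    (hol : ∀ ζ, DiffContOnCl ℂ (F ζ) (ball 0 1)) (hF0 : ∀ ζ : Circle, F ζ 0 = f ζ)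
    {U V : Set E} (hU : IsOpen U) (hV : IsOpen V) (hFU : ∀ ζ, MapsTo (F ζ) (closedBall 0 1) U)
    (hFV : ∀ ζ, MapsTo (F ζ) (sphere 0 1) V) {r : ℝ} (hr : r < 1) {ε : ℝ} (hε : 0 < ε) :
    ∃ g : ℂ → E, DiffContOnCl ℂ g (ball 0 1) ∧ MapsTo g (sphere 0 1) V ∧
      (∀ ζ ∈ closedBall (0 : ℂ) 1, dist (g ζ) (f ζ) < ε ∨ g ζ ∈ U) ∧
      IsCentralPerturbation r ε f g := by
  obtain ⟨M, h, hh, hUh, hVh⟩ := exists_meromorphicFamily_mem hF hol hF0 hU hV hFU hFV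
  obtain ⟨s, hs1, hs⟩ :=
    exists_meromorphicFamily_mem_of_lt_norm hf.continuousOn_ball hh.continuous hU hUh
  obtain ⟨k, hk⟩ := (eventually_isCentralPerturbation_pushedDisc
    (hf.differentiableAt isOpen_ball (mem_ball_self one_pos)) M hh (le_max_left 0 (max r s))
    (max_lt one_pos (max_lt hr hs1)) hε).exists
  refine ⟨pushedDisc f M h k, diffContOnCl_pushedDisc hf M hh k, fun ζ hζ => ?_, fun ζ hζ => ?_,
    fun ζ hζ => hk.dist_lt ζ (closedBall_subset_closedBall (by simp) hζ), hk.map_zero,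
    hk.deriv_zero⟩
  · rw [pushedDisc_eq_meromorphicFamily f M h k (ne_of_mem_sphere hζ one_ne_zero)]
    rw [mem_sphere_zero_iff_norm] at hζ
    exact hVh ⟨by simp [hζ], by simp [hζ]⟩
  · refine (le_or_gt ‖ζ‖ (max 0 (max r s))).imp
      (fun hle => hk.dist_lt ζ (mem_closedBall_zero_iff.2 hle)) fun hlt => ?_
    obtain ⟨h0, -, hsζ⟩ : 0 < ‖ζ‖ ∧ r < ‖ζ‖ ∧ s < ‖ζ‖ := by simpa using hlt
    rw [pushedDisc_eq_meromorphicFamily f M h k (norm_pos_iff.1 h0)]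
    exact hs _ ⟨hζ, pow_mem_closedBall_zero_one hζ _⟩ hsζ

end Approximation

section Disc

variable {E : Type*} [NormedAddCommGroup E] [NormedSpace ℂ E] {X Q K C C' : Set E} {r ε : ℝ}
  {f : ℂ → E}

/-- A family of analytic discs `η ↦ P x η` through `x` which, for `x ∈ X` outside `C`, stay in `X`
off `Q` and have their boundaries off `C'`. -/
structure IsCrossingSpray (X Q C C' : Set E) (P : E → ℂ → E) : Prop where
  continuousOn : ContinuousOn (fun q : E × ℂ => P q.1 q.2) (univ ×ˢ closedBall 0 1)
  differentiableOn : ∀ x, DifferentiableOn ℂ (P x) (ball 0 1)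
  map_zero : ∀ x, P x 0 = x
  mapsTo_closedBall : ∀ x ∈ X \ C, MapsTo (P x) (closedBall 0 1) (X \ Q)
  mapsTo_sphere : ∀ x ∈ X \ C, MapsTo (P x) (sphere 0 1) C'ᶜ

/-- An analytic disc in `X`, continuous up to the boundary, that avoids `K` outside the disc of
radius `r`. -/
structure IsAdmissibleDisc (X K : Set E) (r : ℝ) (f : ℂ → E) : Prop where
  diffContOnCl : DiffContOnCl ℂ f (ball 0 1)
  mapsTo : MapsTo f (closedBall 0 1) X
  mapsTo_compl : MapsTo f (closedBall 0 1 \ ball 0 r) Kᶜ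

theorem IsAdmissibleDisc.continuousOn (hf : IsAdmissibleDisc X K r f) :
    ContinuousOn f (closedBall 0 1) :=
  hf.diffContOnCl.continuousOn_ball

theorem IsAdmissibleDisc.exists_forall_dist_lt (hf : IsAdmissibleDisc X K r f) (hX : IsOpen X)
    (hK : IsClosed K) :
    ∃ δ > 0, ∀ g, DiffContOnCl ℂ g (ball 0 1) →
      (∀ ζ ∈ closedBall 0 1, dist (g ζ) (f ζ) < δ ∨ g ζ ∈ X \ K) → IsAdmissibleDisc X K r g := by
  have hcpt : IsCompact (closedBall (0 : ℂ) 1) := isCompact_closedBall 0 1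
  obtain ⟨δ₁, hδ₁, hδX⟩ := exists_dist_lt_imp_mem hcpt hf.continuousOn hX hf.mapsTo
  obtain ⟨δ₂, hδ₂, hδK⟩ := exists_dist_lt_imp_mem (hcpt.diff isOpen_ball)
    (hf.continuousOn.mono sdiff_subset) hK.isOpen_compl hf.mapsTo_compl
  refine ⟨min δ₁ δ₂, lt_min hδ₁ hδ₂, fun g hg hclose => ⟨hg, fun ζ hζ => ?_, fun ζ hζ => ?_⟩⟩
  · exact (hclose ζ hζ).elim (fun h => hδX ζ hζ _ (h.trans_le (min_le_left _ _))) And.left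
  · exact (hclose ζ hζ.1).elim (fun h => hδK ζ hζ _ (h.trans_le (min_le_right _ _))) And.right

theorem IsCrossingSpray.diffContOnCl {P : E → ℂ → E} (hP : IsCrossingSpray X Q C C' P) (x : E) :
    DiffContOnCl ℂ (P x) (ball 0 1) := by
  refine ⟨hP.differentiableOn x, ?_⟩
  rw [closure_ball _ one_ne_zero]
  exact hP.continuousOn.comp (f := fun η => (x, η)) (by fun_prop) fun _ hη => ⟨trivial, hη⟩

theorem IsCrossingSpray.exists_disc [CompleteSpace E] {P : E → ℂ → E}
    (hP : IsCrossingSpray X Q C C' P) (hX : IsOpen X) (hK : IsClosed K) (hKQ : K ⊆ Q)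
    (hC' : IsClosed C') (hf : IsAdmissibleDisc X K r f) (hfC : MapsTo f (sphere 0 1) Cᶜ)
    (hr : r < 1) (hε : 0 < ε) :
    ∃ g, IsAdmissibleDisc X K r g ∧ MapsTo g (sphere 0 1) C'ᶜ ∧ IsCentralPerturbation r ε f g := by
  obtain ⟨δ, hδ, hstable⟩ := hf.exists_forall_dist_lt hX hK
  have hsphere (ζ : Circle) : (ζ : ℂ) ∈ sphere (0 : ℂ) 1 :=
    mem_sphere_zero_iff_norm.2 ζ.norm_coe
  have hfXC (ζ : Circle) : f ζ ∈ X \ C :=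
    ⟨hf.mapsTo (sphere_subset_closedBall (hsphere ζ)), hfC (hsphere ζ)⟩
  have hfcirc : Continuous fun ζ : Circle => f ζ :=
    hf.continuousOn.comp_continuous continuous_subtype_val fun ζ =>
      sphere_subset_closedBall (hsphere ζ)
  obtain ⟨g, hg, hgC, hgclose, hgf⟩ := exists_riemannHilbert_approx hf.diffContOnCl
    (F := fun ζ η => P (f ζ) η)
    (hP.continuousOn.comp (f := fun q : Circle × ℂ => (f q.1, q.2))
      ((hfcirc.comp continuous_fst).prodMk continuous_snd).continuousOn fun _ hq => ⟨trivial, hq.2⟩)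
    (fun ζ => hP.diffContOnCl _) (fun ζ => hP.map_zero _) (hX.sdiff hK) hC'.isOpen_compl
    (fun ζ => (hP.mapsTo_closedBall _ (hfXC ζ)).mono_right (sdiff_subset_sdiff_right hKQ))
    (fun ζ => hP.mapsTo_sphere _ (hfXC ζ)) hr (lt_min hε hδ)
  refine ⟨g, hstable g hg fun ζ hζ => (hgclose ζ hζ).imp_left (·.trans_le (min_le_right _ _)),
    hgC, hgf.mono (min_le_left _ _)⟩

theorem exists_disc_of_forall_isCrossingSpray [CompleteSpace E] {C : ℝ → Set E} {δ : ℝ}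
    (hδ : 0 < δ) (hspray : ∀ t ∈ Icc (0 : ℝ) 1, ∀ t' ∈ Icc (t - δ) t,
      ∃ P, IsCrossingSpray X Q (C t) (C t') P)
    (hX : IsOpen X) (hK : IsClosed K) (hKQ : K ⊆ Q) (hC : ∀ t, IsClosed (C t))
    (hf : IsAdmissibleDisc X K r f) (hfC : MapsTo f (sphere 0 1) (C 1)ᶜ) (hr : r < 1)
    (hε : 0 < ε) :
    ∃ g, IsAdmissibleDisc X K r g ∧ MapsTo g (sphere 0 1) (C 0)ᶜ ∧
      IsCentralPerturbation r ε f g := by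
  let τ : ℕ → ℝ := fun j => max 0 (1 - j * δ)
  have hτ (j : ℕ) : τ j ∈ Icc 0 1 :=
    ⟨le_max_left _ _, max_le zero_le_one (sub_le_self _ (by positivity))⟩
  have hτ_succ (j : ℕ) : τ (j + 1) ∈ Icc (τ j - δ) (τ j) := by
    refine ⟨?_, max_le_max_left _ (by push_cast; linarith)⟩
    rw [sub_le_iff_le_add, ← max_add_add_right]
    exact max_le_max (by linarith) (by push_cast; linarith)
  have hdisc (j : ℕ) : ∀ ε > 0, ∃ g, IsAdmissibleDisc X K r g ∧
      MapsTo g (sphere 0 1) (C (τ j))ᶜ ∧ IsCentralPerturbation r ε f g := by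
    induction j with
    | zero => exact fun ε hε => ⟨f, hf, by simpa [τ] using hfC, .refl hε f⟩
    | succ j ih =>
      intro ε hε
      obtain ⟨g, hg, hgC, hgf⟩ := ih (ε / 2) (half_pos hε)
      obtain ⟨P, hP⟩ := hspray _ (hτ j) _ (hτ_succ j)
      obtain ⟨h, hh, hhC, hhg⟩ := hP.exists_disc hX hK hKQ (hC _) hg hgC hr (half_pos hε)
      exact ⟨h, hh, hhC, add_halves ε ▸ hgf.trans hhg⟩
  obtain ⟨j, hj⟩ := exists_nat_gt (1 / δ)
  have hτj : τ j = 0 := max_eq_left (by linarith [(div_lt_iff₀ hδ).1 hj])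
  exact hτj ▸ hdisc j ε hε

theorem IsAdmissibleDisc.exists_rescale (hf : IsAdmissibleDisc X K r f) (hX : IsOpen X)
    (hK : IsClosed K) (hC : IsClosed C) (hfC : MapsTo f (sphere 0 1) Cᶜ) (hr : r < 1)
    (hε : 0 < ε) :
    ∃ R : ℝ, r < R ∧ R < 1 ∧ IsAdmissibleDisc X K r (fun ζ => f (R * ζ)) ∧
      MapsTo (fun ζ => f (R * ζ)) (sphere 0 1) Cᶜ ∧
      ∀ ζ ∈ closedBall 0 1, dist (f (R * ζ)) (f ζ) < ε := by
  obtain ⟨δ₁, hδ₁, hstable⟩ := hf.exists_forall_dist_lt hX hK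
  obtain ⟨δ₂, hδ₂, hboundary⟩ := exists_dist_lt_imp_mem (isCompact_sphere (0 : ℂ) 1)
    (hf.continuousOn.mono sphere_subset_closedBall) hC.isOpen_compl hfC
  obtain ⟨R, hclose, hR, hR1⟩ := ((eventually_dist_mul_lt hf.continuousOn
    (lt_min hε (lt_min hδ₁ hδ₂))).and (Ioo_mem_nhdsLT (max_lt hr one_pos))).exists
  have hR0 : 0 < R := (le_max_right _ _).trans_lt hR
  have hdiff : Differentiable ℂ fun ζ : ℂ => (R : ℂ) * ζ := by fun_prop
  have hmaps : MapsTo (fun ζ : ℂ => (R : ℂ) * ζ) (ball 0 1) (ball 0 1) := fun ζ hζ =>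
    closedBall_subset_ball hR1 (ofReal_mul_mem_closedBall hR0.le (ball_subset_closedBall hζ))
  refine ⟨R, (le_max_left _ _).trans_lt hR, hR1,
    hstable _ (hf.diffContOnCl.comp hdiff.diffContOnCl hmaps) fun ζ hζ => .inl ?_,
    fun ζ hζ => hboundary ζ hζ _ ?_, fun ζ hζ => (hclose ζ hζ).trans_le (min_le_left _ _)⟩
  · exact (hclose ζ hζ).trans_le ((min_le_right _ _).trans (min_le_left _ _))
  · exact (hclose ζ (sphere_subset_closedBall hζ)).trans_le
      ((min_le_right _ _).trans (min_le_right _ _))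

theorem image_inter_eq_empty_iff_mapsTo {α β : Type*} {h : α → β} {s : Set α} {t : Set β} :
    h '' s ∩ t = ∅ ↔ MapsTo h s tᶜ := by
  rw [← disjoint_iff_inter_eq_empty, ← subset_compl_iff_disjoint_right, mapsTo_iff_image_subset]

end Disc

section Convexity

theorem lt_add_of_second_fderiv_pos {E : Type*} [NormedAddCommGroup E] [NormedSpace ℝ E]
    {ω : Set E} (hω : Convex ℝ ω) {ρ : E → ℝ} {D : E → E →L[ℝ] ℝ} {D₂ : E → E →L[ℝ] E →L[ℝ] ℝ}
    (hρ : ∀ x ∈ ω, HasFDerivAt ρ (D x) x) (hD : ∀ x ∈ ω, HasFDerivAt D (D₂ x) x) {z w : E}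
    (hz : z ∈ ω) (hzw : z + w ∈ ω) (hpos : ∀ x ∈ ω, 0 < D₂ x w w) (hcrit : D z w = 0) :
    ρ z < ρ (z + w) := by
  have hmem : ∀ s ∈ Icc (0 : ℝ) 1, z + s • w ∈ ω := fun s hs => by
    simpa using hω.add_smul_sub_mem hz hzw hs
  have hline (s : ℝ) : HasDerivAt (fun s : ℝ => z + s • w) w s := by
    simpa using ((hasDerivAt_id s).smul_const w).const_add z
  have hρ' : ∀ s ∈ Icc (0 : ℝ) 1,
      HasDerivAt (fun s : ℝ => ρ (z + s • w)) (D (z + s • w) w) s :=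
    fun s hs => (hρ _ (hmem s hs)).comp_hasDerivAt s (hline s)
  have hD' : ∀ s ∈ Icc (0 : ℝ) 1,
      HasDerivAt (fun s : ℝ => D (z + s • w) w) (D₂ (z + s • w) w w) s := fun s hs =>
    (ContinuousLinearMap.apply ℝ ℝ w).hasFDerivAt.comp_hasDerivAt s
      ((hD _ (hmem s hs)).comp_hasDerivAt s (hline s))
  have hDmono : StrictMonoOn (fun s : ℝ => D (z + s • w) w) (Icc 0 1) :=
    strictMonoOn_of_hasDerivWithinAt_pos (convex_Icc 0 1)
      (fun s hs => (hD' s hs).continuousAt.continuousWithinAt)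
      (fun s hs => (hD' s (interior_subset hs)).hasDerivWithinAt)
      fun s hs => hpos _ (hmem s (interior_subset hs))
  have hρmono : StrictMonoOn (fun s : ℝ => ρ (z + s • w)) (Icc 0 1) :=
    strictMonoOn_of_hasDerivWithinAt_pos (convex_Icc 0 1)
      (fun s hs => (hρ' s hs).continuousAt.continuousWithinAt)
      (fun s hs => (hρ' s (interior_subset hs)).hasDerivWithinAt) fun s hs => by
        rw [interior_Icc] at hs
        simpa [hcrit] using hDmono (left_mem_Icc.2 zero_le_one) (Ioo_subset_Icc_self hs) hs.1
  simpa using hρmono (left_mem_Icc.2 zero_le_one) (right_mem_Icc.2 zero_le_one) one_pos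

theorem exists_forall_add_le_of_lt {ι E : Type*} [TopologicalSpace ι] [T2Space ι]
    [NormedAddCommGroup E] [NormedSpace ℝ E] [ProperSpace E] {J : Set ι} (hJ : IsCompact J)
    {ω S N : Set E} {ρ : ι → E → ℝ} {D : ι → E → E →L[ℝ] ℝ} {s : ℝ}
    (hρ : ContinuousOn (fun q : ι × E => ρ q.1 q.2) (J ×ˢ ω))
    (hD : ContinuousOn (fun q : ι × E => D q.1 q.2) (J ×ˢ ω)) (hS : IsClosed S)
    (hN : IsCompact N) (hNω : cthickening s N ⊆ ω)
    (hlt : ∀ t ∈ J, ∀ z ∈ N, ∀ w ∈ S, ‖w‖ = s → D t z w = 0 → ρ t z < ρ t (z + w)) :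
    ∃ c > 0, ∀ t ∈ J, ∀ z ∈ N, ∀ w ∈ S, ‖w‖ = s → D t z w = 0 → ρ t z + c ≤ ρ t (z + w) := by
  let T : Set (ι × E × E) := J ×ˢ N ×ˢ (sphere 0 s ∩ S)
  have hT : IsCompact T := hJ.prod (hN.prod ((isCompact_sphere _ _).inter_right hS))
  have hbase : MapsTo (fun q : ι × E × E => (q.1, q.2.1)) T (J ×ˢ ω) := fun q hq =>
    ⟨hq.1, hNω (self_subset_cthickening _ hq.2.1)⟩
  have hshift : MapsTo (fun q : ι × E × E => (q.1, q.2.1 + q.2.2)) T (J ×ˢ ω) := fun q hq =>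
    ⟨hq.1, hNω (mem_cthickening_of_dist_le _ q.2.1 _ _ hq.2.1 (by
      simpa using (mem_sphere_zero_iff_norm.1 hq.2.2.1).le))⟩
  have hslope : ContinuousOn (fun q : ι × E × E => D q.1 q.2.1 q.2.2) T :=
    (hD.comp (f := fun q : ι × E × E => (q.1, q.2.1)) (by fun_prop) hbase).clm_apply (by fun_prop)
  have hgap : ContinuousOn (fun q : ι × E × E => ρ q.1 (q.2.1 + q.2.2) - ρ q.1 q.2.1) T :=
    (hρ.comp (f := fun q : ι × E × E => (q.1, q.2.1 + q.2.2)) (by fun_prop) hshift).sub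
      (hρ.comp (f := fun q : ι × E × E => (q.1, q.2.1)) (by fun_prop) hbase)
  have htangent : IsCompact (T ∩ (fun q : ι × E × E => D q.1 q.2.1 q.2.2) ⁻¹' {0}) :=
    hT.of_isClosed_subset (hslope.preimage_isClosed_of_isClosed hT.isClosed isClosed_singleton)
      inter_subset_left
  obtain ⟨c, hc, hcT⟩ := htangent.exists_forall_le' (hgap.mono inter_subset_left) (a := 0)
    fun q ⟨⟨ht, hz, hn, hw⟩, h0⟩ =>
      sub_pos.2 (hlt _ ht _ hz _ hw (mem_sphere_zero_iff_norm.1 hn) h0)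
  refine ⟨c, hc, fun t ht z hz w hw hws h0 => ?_⟩
  linarith [hcT (t, z, w) ⟨⟨ht, hz, mem_sphere_zero_iff_norm.2 hws, hw⟩, h0⟩]

theorem mem_closure_setOf_lt_iff {E : Type*} [NormedAddCommGroup E] [NormedSpace ℝ E] {ρ : E → ℝ}
    {D : E →L[ℝ] ℝ} {z : E} (hρ : HasFDerivAt ρ D z) (hD : D ≠ 0) (a : ℝ) :
    z ∈ closure {x | ρ x < a} ↔ ρ z ≤ a := by
  rw [mem_closure_iff_frequently]
  refine ⟨fun h => ?_, fun hle h => hD (IsLocalMin.hasFDerivAt_eq_zero ?_ hρ)⟩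
  · by_contra! hlt
    exact h ((hρ.continuousAt.eventually_const_lt hlt).mono fun _ hx => hx.not_gt)
  · exact h.mono fun _ hx => hle.trans (not_lt.1 hx)

end Convexity

section ComplexTangent

variable {E : Type*} [NormedAddCommGroup E] [NormedSpace ℂ E]

/-- A vector in the complex span of `e₁` and `e₂` whose complex line lies in the kernel of the
real functional `ℓ`. -/
noncomputable def complexTangent (e₁ e₂ : E) (ℓ : StrongDual ℝ E) : E :=
  ℓ.extendRCLike (𝕜 := ℂ) e₁ • e₂ - ℓ.extendRCLike (𝕜 := ℂ) e₂ • e₁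

theorem continuous_complexTangent (e₁ e₂ : E) : Continuous (complexTangent e₁ e₂) := by
  unfold complexTangent
  simp only [StrongDual.extendRCLike_apply]
  have (x : E) : Continuous fun ℓ : StrongDual ℝ E => (ℓ x : ℂ) :=
    Complex.continuous_ofReal.comp (continuous_eval_const x)
  have (x : E) : Continuous fun ℓ : StrongDual ℝ E => ℓ x - Complex.I * ℓ (Complex.I • x) := by
    fun_prop
  fun_prop

theorem apply_smul_complexTangent (e₁ e₂ : E) (ℓ : StrongDual ℝ E) (η : ℂ) :
    ℓ (η • complexTangent e₁ e₂ ℓ) = 0 := by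
  rw [← StrongDual.re_extendRCLike_apply (𝕜 := ℂ)]
  simp [complexTangent, mul_comm]

theorem complexTangent_ne_zero {e₁ e₂ : E} (he : LinearIndependent ℂ ![e₁, e₂])
    {ℓ : StrongDual ℝ E} {w : E} (hw : w ∈ Submodule.span ℂ {e₁, e₂}) (hℓw : ℓ w ≠ 0) :
    complexTangent e₁ e₂ ℓ ≠ 0 := by
  intro h0
  have hzero := LinearIndependent.pair_iff.1 he (-ℓ.extendRCLike (𝕜 := ℂ) e₂)
    (ℓ.extendRCLike (𝕜 := ℂ) e₁) (by rw [← h0, complexTangent]; module)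
  obtain ⟨a, b, rfl⟩ := Submodule.mem_span_pair.1 hw
  refine hℓw ?_
  rw [← StrongDual.re_extendRCLike_apply (𝕜 := ℂ)]
  simp [hzero.2, neg_eq_zero.1 hzero.1]

theorem complexTangent_mem_span (e₁ e₂ : E) (ℓ : StrongDual ℝ E) :
    complexTangent e₁ e₂ ℓ ∈ Submodule.span ℂ {e₁, e₂} :=
  Submodule.sub_mem _ (Submodule.smul_mem _ _ (Submodule.subset_span (by simp)))
    (Submodule.smul_mem _ _ (Submodule.subset_span (by simp)))

theorem exists_continuousAt_unit_complexTangent {e₁ e₂ : E} (he : LinearIndependent ℂ ![e₁, e₂]) :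
    ∃ v : StrongDual ℝ E → E, (∀ ℓ, v ℓ ∈ Submodule.span ℂ {e₁, e₂}) ∧
      (∀ (ℓ : StrongDual ℝ E) (η : ℂ), ℓ (η • v ℓ) = 0) ∧
      ∀ ℓ : StrongDual ℝ E, (∃ w ∈ Submodule.span ℂ {e₁, e₂}, ℓ w ≠ 0) →
        ‖v ℓ‖ = 1 ∧ ContinuousAt v ℓ := by
  refine ⟨fun ℓ => (‖complexTangent e₁ e₂ ℓ‖⁻¹ : ℂ) • complexTangent e₁ e₂ ℓ,
    fun ℓ => Submodule.smul_mem _ _ (complexTangent_mem_span e₁ e₂ ℓ),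
    fun ℓ η => by rw [smul_smul, apply_smul_complexTangent], fun ℓ ⟨w, hw, hℓw⟩ => ?_⟩
  have hne := norm_ne_zero_iff.2 (complexTangent_ne_zero he hw hℓw)
  have hcont := continuous_complexTangent e₁ e₂
  exact ⟨by simp [norm_smul, hne], ((Complex.continuous_ofReal.comp hcont.norm).continuousAt.inv₀
    (Complex.ofReal_ne_zero.2 hne)).smul hcont.continuousAt⟩

end ComplexTangent

section ChartSpray

variable {M E : Type*} [TopologicalSpace M] [NormedAddCommGroup E] [NormedSpace ℂ E]
  {φ : OpenPartialHomeomorph M E} {u : E → E} {x : M} {η : ℂ}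

open Classical in
/-- The family of discs `η ↦ φ⁻¹(φ x + η • u (φ x))` along a vector field `u` on the target of the
chart `φ`, extended by the constant discs outside the source of `φ`. -/
noncomputable def chartSpray (φ : OpenPartialHomeomorph M E) (u : E → E) (x : M) (η : ℂ) : M :=
  if x ∈ φ.source then φ.symm (φ x + η • u (φ x)) else x

theorem chartSpray_of_mem (hx : x ∈ φ.source) :
    chartSpray φ u x η = φ.symm (φ x + η • u (φ x)) :=
  if_pos hx

theorem chartSpray_of_notMem (hx : x ∉ φ.source) : chartSpray φ u x η = x :=
  if_neg hx

theorem chartSpray_of_smul_eq_zero (h : η • u (φ x) = 0) : chartSpray φ u x η = x := by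
  by_cases hx : x ∈ φ.source
  · rw [chartSpray_of_mem hx, h, add_zero, φ.left_inv hx]
  · exact chartSpray_of_notMem hx

theorem chartSpray_mem_source (hx : x ∈ φ.source) (hη : φ x + η • u (φ x) ∈ φ.target) :
    chartSpray φ u x η ∈ φ.source := by
  rw [chartSpray_of_mem hx]
  exact φ.map_target hη

theorem apply_chartSpray (hx : x ∈ φ.source) (hη : φ x + η • u (φ x) ∈ φ.target) :
    φ (chartSpray φ u x η) = φ x + η • u (φ x) := by
  rw [chartSpray_of_mem hx, φ.right_inv hη]

theorem continuousOn_chartSpray [T2Space M] {D : Set ℂ} {C : Set E}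
    (hu : ContinuousOn u φ.target) (hadd : ∀ z ∈ φ.target, ∀ η ∈ D, z + η • u z ∈ φ.target)
    (hC : IsCompact C) (hCφ : C ⊆ φ.target) (hu0 : ∀ z ∉ C, u z = 0) :
    ContinuousOn (fun q : M × ℂ => chartSpray φ u q.1 q.2) (univ ×ˢ D) := by
  have hsource : ContinuousOn (fun q : M × ℂ => chartSpray φ u q.1 q.2) (φ.source ×ˢ D) := by
    have hφ : ContinuousOn (fun q : M × ℂ => φ q.1) (φ.source ×ˢ D) :=
      φ.continuousOn.comp continuousOn_fst fun _ hq => hq.1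
    have huφ : ContinuousOn (fun q : M × ℂ => u (φ q.1)) (φ.source ×ˢ D) :=
      hu.comp hφ fun _ hq => φ.map_source hq.1
    exact (φ.continuousOn_symm.comp (hφ.add (continuousOn_snd.smul huφ))
      fun q hq => hadd _ (φ.map_source hq.1) _ hq.2).congr fun q hq => chartSpray_of_mem hq.1
  have hclosed : IsClosed (φ.symm '' C) :=
    (hC.image_of_continuousOn (φ.continuousOn_symm.mono hCφ)).isClosed
  have hfixed : ∀ y ∉ φ.symm '' C, ∀ η, chartSpray φ u y η = y := fun y hy η => by
    by_cases hyφ : y ∈ φ.source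
    · exact chartSpray_of_smul_eq_zero (by
        rw [hu0 _ fun h => hy ⟨φ y, h, φ.left_inv hyφ⟩, smul_zero])
    · exact chartSpray_of_notMem hyφ
  rintro ⟨x, η⟩ ⟨-, hη⟩
  by_cases hx : x ∈ φ.source
  · refine (hsource (x, η) ⟨hx, hη⟩).mono_of_mem_nhdsWithin ?_
    filter_upwards [self_mem_nhdsWithin, mem_nhdsWithin_of_mem_nhds
      ((φ.open_source.preimage continuous_fst).mem_nhds (x := (x, η)) hx)] with q hq hqx
    exact ⟨hqx, hq.2⟩
  · have hxC : x ∉ φ.symm '' C := fun ⟨z, hz, hzx⟩ => hx (hzx ▸ φ.map_target (hCφ hz))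
    refine (continuous_fst.continuousAt.congr ?_).continuousWithinAt
    filter_upwards [(hclosed.isOpen_compl.preimage continuous_fst).mem_nhds (x := (x, η)) hxC]
      with q hq using (hfixed _ hq _).symm

theorem differentiableOn_chartSpray {F : Type*} [NormedAddCommGroup F] [NormedSpace ℂ F]
    {φ : OpenPartialHomeomorph F E} {D : Set ℂ} (hφ : DifferentiableOn ℂ φ.symm φ.target)
    (hadd : ∀ z ∈ φ.target, ∀ η ∈ D, z + η • u z ∈ φ.target) (x : F) :
    DifferentiableOn ℂ (chartSpray φ u x) D := by
  by_cases hx : x ∈ φ.source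
  · have hdisc : DifferentiableOn ℂ (fun η : ℂ => φ.symm (φ x + η • u (φ x))) D :=
      hφ.comp (by fun_prop) fun η hη => hadd _ (φ.map_source hx) η hη
    exact hdisc.congr fun η _ => chartSpray_of_mem hx
  · exact (differentiableOn_const x).congr fun η _ => chartSpray_of_notMem hx

theorem add_mem_of_notMem_cthickening {E : Type*} [SeminormedAddCommGroup E] {L ω : Set E}
    {s d : ℝ} (hs : 0 ≤ s) (hd : 0 ≤ d) (hω : cthickening (s + d) L ⊆ ω) {z w : E} (hz : z ∈ ω)
    (hw : ‖w‖ ≤ s) (hw0 : z ∉ cthickening d L → w = 0) : z + w ∈ ω := by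
  by_cases hzL : z ∈ cthickening d L
  · exact hω (cthickening_cthickening_subset hs hd L
      (mem_cthickening_of_dist_le _ z _ _ hzL (by simpa using hw)))
  · rwa [hw0 hzL, add_zero]

end ChartSpray

section Chart

variable {E : Type*} [NormedAddCommGroup E] [NormedSpace ℂ E]

/-- The data of a convex bump `B` on `A` inside `X`, for an arbitrary complex subspace `S` in place
of the first two coordinates: a holomorphic chart near `closure B` with convex image in which `A`
and `A ∪ B` are the negativity sets of the `C²` functions `ρA ≥ ρB`, where both functions are
strictly convex along `S` and no convex combination of them has a critical point along `S`. -/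
structure ConvexBumpChart (S : Submodule ℂ E) (X A B : Set E) where
  chart : OpenPartialHomeomorph E E
  ρA : E → ℝ
  ρB : E → ℝ
  source_subset : chart.source ⊆ X
  closure_subset_source : closure B ⊆ chart.source
  convex_target : Convex ℝ chart.target
  differentiableOn_symm : DifferentiableOn ℂ chart.symm chart.target
  contDiffOn_ρA : ContDiffOn ℝ 2 ρA chart.target
  contDiffOn_ρB : ContDiffOn ℝ 2 ρB chart.target
  ρB_le_ρA : ∀ z ∈ chart.target, ρB z ≤ ρA z
  isImage_left : chart.IsImage A {z | ρA z < 0}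
  isImage_union : chart.IsImage (A ∪ B) {z | ρB z < 0}
  hessian_ρA_pos : ∀ z ∈ chart.target, ∀ w ∈ S, w ≠ 0 → 0 < fderiv ℝ (fderiv ℝ ρA) z w w
  hessian_ρB_pos : ∀ z ∈ chart.target, ∀ w ∈ S, w ≠ 0 → 0 < fderiv ℝ (fderiv ℝ ρB) z w w
  exists_fderiv_ne_zero : ∀ t ∈ Icc (0 : ℝ) 1, ∀ z ∈ chart.target, ∃ w ∈ S,
    t * fderiv ℝ ρA z w + (1 - t) * fderiv ℝ ρB z w ≠ 0

namespace ConvexBumpChart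

variable {S : Submodule ℂ E} {X A B : Set E} (c : ConvexBumpChart S X A B)

/-- The interpolation `t ρA + (1 - t) ρB` between the two defining functions. -/
def level (t : ℝ) (z : E) : ℝ := t * c.ρA z + (1 - t) * c.ρB z

/-- The differential of `level t` in the chart. -/
noncomputable def levelDeriv (t : ℝ) (z : E) : E →L[ℝ] ℝ :=
  t • fderiv ℝ c.ρA z + (1 - t) • fderiv ℝ c.ρB z

/-- A set growing from `closure A` at `t = 1` to `closure (A ∪ B)` at `t = 0`, given by
`level t ≤ 0` in the chart. -/
def barrier (t : ℝ) : Set E :=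
  closure A ∪ closure B ∩ {x | c.level t (c.chart x) ≤ 0}

theorem hasFDerivAt_level (t : ℝ) {z : E} (hz : z ∈ c.chart.target) :
    HasFDerivAt (c.level t) (c.levelDeriv t z) z := by
  have hω := c.chart.open_target.mem_nhds hz
  exact (((c.contDiffOn_ρA.contDiffAt hω).differentiableAt two_ne_zero).hasFDerivAt.const_mul t).add
    (((c.contDiffOn_ρB.contDiffAt hω).differentiableAt two_ne_zero).hasFDerivAt.const_mul (1 - t))

theorem hasFDerivAt_levelDeriv (t : ℝ) {z : E} (hz : z ∈ c.chart.target) :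
    HasFDerivAt (c.levelDeriv t) (t • fderiv ℝ (fderiv ℝ c.ρA) z +
      (1 - t) • fderiv ℝ (fderiv ℝ c.ρB) z) z := by
  have hω := c.chart.open_target.mem_nhds hz
  have hA := ((c.contDiffOn_ρA.contDiffAt hω).fderiv_right (m := 1) (by norm_num)).differentiableAt
    one_ne_zero
  have hB := ((c.contDiffOn_ρB.contDiffAt hω).fderiv_right (m := 1) (by norm_num)).differentiableAt
    one_ne_zero
  exact (hA.hasFDerivAt.const_smul t).add (hB.hasFDerivAt.const_smul (1 - t))

theorem continuousOn_level :
    ContinuousOn (fun q : ℝ × E => c.level q.1 q.2) (univ ×ˢ c.chart.target) := by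
  have hA : ContinuousOn (fun q : ℝ × E => c.ρA q.2) (univ ×ˢ c.chart.target) :=
    c.contDiffOn_ρA.continuousOn.comp continuousOn_snd fun _ hq => hq.2
  have hB : ContinuousOn (fun q : ℝ × E => c.ρB q.2) (univ ×ˢ c.chart.target) :=
    c.contDiffOn_ρB.continuousOn.comp continuousOn_snd fun _ hq => hq.2
  unfold level
  fun_prop

theorem continuousOn_levelDeriv :
    ContinuousOn (fun q : ℝ × E => c.levelDeriv q.1 q.2) (univ ×ˢ c.chart.target) := by
  have hA : ContinuousOn (fun q : ℝ × E => fderiv ℝ c.ρA q.2) (univ ×ˢ c.chart.target) :=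
    (c.contDiffOn_ρA.continuousOn_fderiv_of_isOpen c.chart.open_target (by norm_num)).comp
      continuousOn_snd fun _ hq => hq.2
  have hB : ContinuousOn (fun q : ℝ × E => fderiv ℝ c.ρB q.2) (univ ×ˢ c.chart.target) :=
    (c.contDiffOn_ρB.continuousOn_fderiv_of_isOpen c.chart.open_target (by norm_num)).comp
      continuousOn_snd fun _ hq => hq.2
  unfold levelDeriv
  fun_prop

theorem ρB_le_level {t : ℝ} (ht : 0 ≤ t) {z : E} (hz : z ∈ c.chart.target) :
    c.ρB z ≤ c.level t z := by
  unfold level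
  linarith [mul_le_mul_of_nonneg_left (c.ρB_le_ρA z hz) ht]

theorem level_le_ρA {t : ℝ} (ht : t ≤ 1) {z : E} (hz : z ∈ c.chart.target) :
    c.level t z ≤ c.ρA z := by
  unfold level
  linarith [mul_le_mul_of_nonneg_left (c.ρB_le_ρA z hz) (sub_nonneg.2 ht)]

theorem levelDeriv_ne_zero {t : ℝ} (ht : t ∈ Icc (0 : ℝ) 1) {z : E} (hz : z ∈ c.chart.target) :
    c.levelDeriv t z ≠ 0 := by
  obtain ⟨w, -, hw⟩ := c.exists_fderiv_ne_zero t ht z hz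
  exact fun h0 => hw congr($h0 w)

theorem level_lt_level_add {t : ℝ} (ht : t ∈ Icc (0 : ℝ) 1) {z w : E} (hz : z ∈ c.chart.target)
    (hzw : z + w ∈ c.chart.target) (hw : w ∈ S) (hw0 : w ≠ 0) (hcrit : c.levelDeriv t z w = 0) :
    c.level t z < c.level t (z + w) := by
  refine lt_add_of_second_fderiv_pos c.convex_target (fun _ => c.hasFDerivAt_level t)
    (fun _ => c.hasFDerivAt_levelDeriv t) hz hzw (fun x hx => ?_) hcrit
  have := (convex_Ioi (0 : ℝ)) (c.hessian_ρA_pos x hx w hw hw0) (c.hessian_ρB_pos x hx w hw hw0)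
    ht.1 (sub_nonneg.2 ht.2) (add_sub_cancel t 1)
  exact this

theorem mem_closure_left_iff {x : E} (hx : x ∈ c.chart.source) :
    x ∈ closure A ↔ c.ρA (c.chart x) ≤ 0 := by
  have hz := c.chart.map_source hx
  have hderiv := c.hasFDerivAt_level 1 hz
  rw [show c.level 1 = c.ρA by ext; simp [level]] at hderiv
  exact (c.isImage_left.closure hx).symm.trans
    (mem_closure_setOf_lt_iff hderiv (c.levelDeriv_ne_zero (by simp) hz) 0)

theorem mem_closure_union_iff {x : E} (hx : x ∈ c.chart.source) :
    x ∈ closure (A ∪ B) ↔ c.ρB (c.chart x) ≤ 0 := by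
  have hz := c.chart.map_source hx
  have hderiv := c.hasFDerivAt_level 0 hz
  rw [show c.level 0 = c.ρB by ext; simp [level]] at hderiv
  exact (c.isImage_union.closure hx).symm.trans
    (mem_closure_setOf_lt_iff hderiv (c.levelDeriv_ne_zero (by simp) hz) 0)

theorem mem_barrier_iff {t : ℝ} (ht : t ∈ Icc (0 : ℝ) 1) {x : E} (hx : x ∈ c.chart.source) :
    x ∈ c.barrier t ↔ c.level t (c.chart x) ≤ 0 := by
  have hz := c.chart.map_source hx
  refine ⟨fun h => ?_, fun h0 => ?_⟩
  · rcases h with h | h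
    · exact (c.level_le_ρA ht.2 hz).trans ((c.mem_closure_left_iff hx).1 h)
    · exact h.2
  · have hAB := (c.mem_closure_union_iff hx).2 ((c.ρB_le_level ht.1 hz).trans h0)
    rw [closure_union] at hAB
    exact hAB.imp_right fun hB => ⟨hB, h0⟩

theorem isClosed_barrier (t : ℝ) : IsClosed (c.barrier t) := by
  have hcont : ContinuousOn (fun x => c.level t (c.chart x)) (closure B) :=
    c.continuousOn_level.comp (f := fun x => (t, c.chart x))
      (continuousOn_const.prodMk (c.chart.continuousOn.mono c.closure_subset_source))
      fun x hx => ⟨trivial, c.chart.map_source (c.closure_subset_source hx)⟩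
  exact isClosed_closure.union
    (hcont.preimage_isClosed_of_isClosed isClosed_closure isClosed_Iic)

theorem barrier_one : c.barrier 1 = closure A := by
  refine union_eq_left.2 fun x hx => (c.mem_closure_left_iff (c.closure_subset_source hx.1)).2 ?_
  simpa [level] using hx.2

theorem barrier_zero : c.barrier 0 = closure (A ∪ B) := by
  rw [closure_union, barrier]
  refine congrArg _ (inter_eq_left.2 fun x hx => ?_)
  simpa [level] using (c.mem_closure_union_iff (c.closure_subset_source hx)).1
    (closure_mono subset_union_right hx)

theorem exists_level_le_level_add [ProperSpace E] (hB : IsCompact (closure B))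
    (hS : IsClosed (S : Set E)) {s : ℝ} (hs : 0 < s)
    (hsω : cthickening s (cthickening s (c.chart '' closure B)) ⊆ c.chart.target) :
    ∃ δ > 0, ∀ t ∈ Icc (0 : ℝ) 1, ∀ t' ∈ Icc (t - δ) t, ∀ z, ∀ w ∈ S, ‖w‖ = s →
      c.levelDeriv t z w = 0 → z + w ∈ c.chart '' closure B → c.level t z ≤ c.level t' (z + w) := by
  set L := c.chart '' closure B
  have hL : IsCompact L :=
    hB.image_of_continuousOn (c.chart.continuousOn.mono c.closure_subset_source)
  have hNω : cthickening s L ⊆ c.chart.target := (self_subset_cthickening _).trans hsω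
  have hLω : L ⊆ c.chart.target := (self_subset_cthickening _).trans hNω
  obtain ⟨κ, hκ, hgain⟩ := exists_forall_add_le_of_lt isCompact_Icc
    (c.continuousOn_level.mono (prod_mono_left (subset_univ (Icc (0 : ℝ) 1))))
    (c.continuousOn_levelDeriv.mono (prod_mono_left (subset_univ (Icc (0 : ℝ) 1))))
    hS hL.cthickening hsω fun t ht z hz w hw hws h0 => c.level_lt_level_add ht (hNω hz)
      (hsω (mem_cthickening_of_dist_le _ z _ _ hz (by simp [hws]))) hw
      (norm_pos_iff.1 (hws ▸ hs)) h0
  obtain ⟨b, hb0, hb⟩ : ∃ b > 0, ∀ y ∈ L, c.ρA y - c.ρB y ≤ b := by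
    obtain ⟨b, hb⟩ := (hL.bddAbove_image
      ((c.contDiffOn_ρA.continuousOn.sub c.contDiffOn_ρB.continuousOn).mono hLω))
    exact ⟨max b 1, by positivity, fun y hy => (hb (mem_image_of_mem _ hy)).trans (le_max_left _ _)⟩
  refine ⟨κ / b, by positivity, fun t ht t' ht' z w hw hws h0 hzw => ?_⟩
  have hzL : z ∈ cthickening s L := mem_cthickening_of_dist_le _ _ _ _ hzw (by simp [hws])
  have hdrop : c.level t (z + w) - c.level t' (z + w) ≤ κ := calc
    _ = (t - t') * (c.ρA (z + w) - c.ρB (z + w)) := by unfold level; ring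
    _ ≤ κ / b * b := mul_le_mul (by linarith [ht'.1]) (hb _ hzw)
        (sub_nonneg.2 (c.ρB_le_ρA _ (hLω hzw))) (by positivity)
    _ = κ := div_mul_cancel₀ κ hb0.ne'
  linarith [hgain t ht z hzL w hw hws h0]

/-- A vector field in the chart along which the discs `η ↦ z + η • u z`, `|η| ≤ 1`, are tangent to
the levels of `level t`; it has length `s` near the image of `closure B`, so that there the strict
convexity of `level t` forces the boundary of the disc away from the sublevel set. -/
structure IsPushingField (t s : ℝ) (u : E → E) : Prop where
  continuousOn : ContinuousOn u c.chart.target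
  mem : ∀ z, u z ∈ S
  levelDeriv_smul : ∀ z (η : ℂ), c.levelDeriv t z (η • u z) = 0
  add_smul_mem : ∀ z ∈ c.chart.target, ∀ η ∈ closedBall (0 : ℂ) 1, z + η • u z ∈ c.chart.target
  exists_isCompact : ∃ C, IsCompact C ∧ C ⊆ c.chart.target ∧ ∀ z ∉ C, u z = 0
  norm_le : ∀ z ∈ c.chart.target, ‖u z‖ ≤ s
  norm_eq : ∀ z ∈ cthickening s (c.chart '' closure B), ‖u z‖ = s

theorem exists_isPushingField [ProperSpace E] {e₁ e₂ : E} (he : LinearIndependent ℂ ![e₁, e₂])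
    (c : ConvexBumpChart (Submodule.span ℂ {e₁, e₂}) X A B) (hB : IsCompact (closure B)) {t s : ℝ}
    (ht : t ∈ Icc (0 : ℝ) 1) (hs : 0 < s)
    (hsω : cthickening (3 * s) (c.chart '' closure B) ⊆ c.chart.target) :
    ∃ u, c.IsPushingField t s u := by
  set L := c.chart '' closure B
  have hL : IsCompact L :=
    hB.image_of_continuousOn (c.chart.continuousOn.mono c.closure_subset_source)
  have hthick {a : ℝ} (ha : a ≤ 3 * s) : cthickening a L ⊆ c.chart.target :=
    (cthickening_mono ha L).trans hsω
  obtain ⟨v, hvS, hvker, hv⟩ := exists_continuousAt_unit_complexTangent he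
  obtain ⟨χ, hχ0, hχ1, hχ⟩ := exists_continuous_zero_one_of_isClosed
    (s := (thickening (2 * s) L)ᶜ) (t := cthickening s L) isOpen_thickening.isClosed_compl
    isClosed_cthickening (disjoint_compl_left_iff_subset.2
      (cthickening_subset_thickening' (by positivity) (by linarith) L))
  have hvz (z : E) (hz : z ∈ c.chart.target) := hv (c.levelDeriv t z)
    (c.exists_fderiv_ne_zero t ht z hz)
  let u : E → E := fun z => ((s * χ z : ℝ) : ℂ) • v (c.levelDeriv t z)
  have hnorm (z : E) (hz : z ∈ c.chart.target) : ‖u z‖ = s * χ z := by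
    rw [norm_smul, (hvz z hz).1, mul_one, Complex.norm_of_nonneg (mul_nonneg hs.le (hχ z).1)]
  have hnorm_le (z : E) (hz : z ∈ c.chart.target) : ‖u z‖ ≤ s :=
    (hnorm z hz).trans_le (mul_le_of_le_one_right hs.le (hχ z).2)
  have hsupp (z : E) (hz : z ∉ cthickening (2 * s) L) : u z = 0 := by
    simp [u, hχ0 fun h => hz (thickening_subset_cthickening _ _ h)]
  have hderiv : ContinuousOn (c.levelDeriv t) c.chart.target := fun z hz =>
    (c.hasFDerivAt_levelDeriv t hz).continuousAt.continuousWithinAt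
  refine ⟨u, ?_, fun z => Submodule.smul_mem _ _ (hvS _),
    fun z η => by rw [smul_smul]; exact hvker _ _, fun z hz η hη => ?_,
    ⟨_, hL.cthickening, hthick (by linarith), hsupp⟩, hnorm_le, fun z hz => ?_⟩
  · exact (by fun_prop : Continuous fun z => ((s * χ z : ℝ) : ℂ)).continuousOn.smul fun z hz =>
      (hvz z hz).2.comp_continuousWithinAt (hderiv z hz)
  · refine add_mem_of_notMem_cthickening (d := 2 * s) (L := L) hs.le (by positivity) ?_ hz ?_
      fun hzL => by rw [hsupp z hzL, smul_zero]
    · exact hthick (by linarith)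
    rw [norm_smul]
    exact (mul_le_of_le_one_left (norm_nonneg _) (mem_closedBall_zero_iff.1 hη)).trans
      (hnorm_le z hz)
  · rw [hnorm z (hthick (by linarith) hz), hχ1 hz, Pi.one_apply, mul_one]

section IsPushingField

variable {c} {t t' s : ℝ} {u : E → E}

theorem IsPushingField.level_le (hu : c.IsPushingField t s u) (ht : t ∈ Icc (0 : ℝ) 1) {z : E}
    (hz : z ∈ c.chart.target) {η : ℂ} (hη : η ∈ closedBall (0 : ℂ) 1) :
    c.level t z ≤ c.level t (z + η • u z) := by
  rcases eq_or_ne (η • u z) 0 with h0 | h0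
  · rw [h0, add_zero]
  · exact (c.level_lt_level_add ht hz (hu.add_smul_mem z hz η hη) (S.smul_mem _ (hu.mem z)) h0
      (hu.levelDeriv_smul z η)).le

theorem IsPushingField.chartSpray_notMem_barrier (hu : c.IsPushingField t s u)
    (ht : t ∈ Icc (0 : ℝ) 1) {x : E} (hx : x ∉ c.barrier t) {η : ℂ}
    (hη : η ∈ closedBall (0 : ℂ) 1) : chartSpray c.chart u x η ∉ c.barrier t := by
  by_cases hxs : x ∈ c.chart.source
  · have hadd := hu.add_smul_mem _ (c.chart.map_source hxs) η hη
    rw [c.mem_barrier_iff ht (chartSpray_mem_source hxs hadd), apply_chartSpray hxs hadd, not_le]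
    rw [c.mem_barrier_iff ht hxs, not_le] at hx
    exact hx.trans_le (hu.level_le ht (c.chart.map_source hxs) hη)
  · rwa [chartSpray_of_notMem hxs]

theorem IsPushingField.chartSpray_notMem_barrier_of_mem_sphere (hu : c.IsPushingField t s u)
    (ht : t ∈ Icc (0 : ℝ) 1)
    (hgain : ∀ z, ∀ w ∈ S, ‖w‖ = s → c.levelDeriv t z w = 0 →
      z + w ∈ c.chart '' closure B → c.level t z ≤ c.level t' (z + w))
    {x : E} (hx : x ∉ c.barrier t) {η : ℂ} (hη : η ∈ sphere (0 : ℂ) 1) :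
    chartSpray c.chart u x η ∉ c.barrier t' := by
  have hη' := sphere_subset_closedBall hη
  rintro (hmem | ⟨hmem, hle⟩)
  · exact hu.chartSpray_notMem_barrier ht hx hη' (Or.inl hmem)
  have hxs : x ∈ c.chart.source := by
    by_contra hxs
    rw [chartSpray_of_notMem hxs] at hmem
    exact hxs (c.closure_subset_source hmem)
  have hz := c.chart.map_source hxs
  have happly := apply_chartSpray hxs (hu.add_smul_mem _ hz η hη')
  have hL : c.chart x + η • u (c.chart x) ∈ c.chart '' closure B :=
    happly ▸ mem_image_of_mem _ hmem
  have hnorm : ‖η • u (c.chart x)‖ = ‖u (c.chart x)‖ := by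
    rw [norm_smul, mem_sphere_zero_iff_norm.1 hη, one_mul]
  have hnear : c.chart x ∈ cthickening s (c.chart '' closure B) :=
    mem_cthickening_of_dist_le _ _ _ _ hL (by simpa [hnorm] using hu.norm_le _ hz)
  rw [mem_ofPred_eq, happly] at hle
  refine hx ((c.mem_barrier_iff ht hxs).2 ((hgain _ _ (S.smul_mem η (hu.mem _)) ?_
    (hu.levelDeriv_smul _ η) hL).trans hle))
  rw [hnorm, hu.norm_eq _ hnear]

theorem IsPushingField.isCrossingSpray (hu : c.IsPushingField t s u) (ht : t ∈ Icc (0 : ℝ) 1)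
    (hgain : ∀ z, ∀ w ∈ S, ‖w‖ = s → c.levelDeriv t z w = 0 →
      z + w ∈ c.chart '' closure B → c.level t z ≤ c.level t' (z + w)) :
    IsCrossingSpray X (closure A) (c.barrier t) (c.barrier t') (chartSpray c.chart u) := by
  obtain ⟨C, hC, hCω, hu0⟩ := hu.exists_isCompact
  refine ⟨continuousOn_chartSpray hu.continuousOn hu.add_smul_mem hC hCω hu0,
    differentiableOn_chartSpray c.differentiableOn_symm fun z hz η hη =>
      hu.add_smul_mem z hz η (ball_subset_closedBall hη),
    fun x => chartSpray_of_smul_eq_zero (zero_smul _ _), fun x hx η hη => ⟨?_, fun hA =>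
      hu.chartSpray_notMem_barrier ht hx.2 hη (Or.inl hA)⟩,
    fun x hx η hη => hu.chartSpray_notMem_barrier_of_mem_sphere ht hgain hx.2 hη⟩
  by_cases hxs : x ∈ c.chart.source
  · exact c.source_subset
      (chartSpray_mem_source hxs (hu.add_smul_mem _ (c.chart.map_source hxs) η hη))
  · rw [chartSpray_of_notMem hxs]
    exact hx.1

end IsPushingField

theorem exists_isCrossingSpray [ProperSpace E] {e₁ e₂ : E} (he : LinearIndependent ℂ ![e₁, e₂])
    (c : ConvexBumpChart (Submodule.span ℂ {e₁, e₂}) X A B) (hB : IsCompact (closure B)) :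
    ∃ δ > 0, ∀ t ∈ Icc (0 : ℝ) 1, ∀ t' ∈ Icc (t - δ) t,
      ∃ P, IsCrossingSpray X (closure A) (c.barrier t) (c.barrier t') P := by
  have hL : IsCompact (c.chart '' closure B) :=
    hB.image_of_continuousOn (c.chart.continuousOn.mono c.closure_subset_source)
  obtain ⟨a, ha, haω⟩ := hL.exists_cthickening_subset_open c.chart.open_target
    (image_subset_iff.2 fun x hx => c.chart.map_source (c.closure_subset_source hx))
  obtain ⟨s, hs, rfl⟩ : ∃ s > 0, a = 3 * s := ⟨a / 3, by positivity, by ring⟩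
  have hsω : cthickening s (cthickening s (c.chart '' closure B)) ⊆ c.chart.target :=
    (cthickening_cthickening_subset hs.le hs.le _).trans
      ((cthickening_mono (by linarith) _).trans haω)
  have hfin : FiniteDimensional ℂ (Submodule.span ℂ {e₁, e₂}) :=
    FiniteDimensional.span_of_finite ℂ (toFinite _)
  obtain ⟨δ, hδ, hgain⟩ := c.exists_level_le_level_add hB
    (Submodule.closed_of_finiteDimensional _) hs hsω
  refine ⟨δ, hδ, fun t ht t' ht' => ?_⟩
  obtain ⟨u, hu⟩ := c.exists_isPushingField he hB ht hs haω
  exact ⟨_, hu.isCrossingSpray ht (hgain t ht t' ht')⟩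

end ConvexBumpChart

end Chart

theorem IsConvexTwoBump.nonempty_convexBumpChart {n : ℕ} {hn : 2 ≤ n}
    {X A B : Set (EuclideanSpace ℂ (Fin n))} (h : IsConvexTwoBump n hn X A B) :
    Nonempty (ConvexBumpChart (Submodule.span ℂ
      {EuclideanSpace.single (⟨0, by omega⟩ : Fin n) (1 : ℂ),
        EuclideanSpace.single (⟨1, by omega⟩ : Fin n) (1 : ℂ)}) X A B) := by
  obtain ⟨Ω, ω, Φ, Ψ, ρA, ρB, hΩ, hΩX, hBΩ, hω, hωc, hΦ, hΨ, hΦΩ, hΨΦ, hΦΨ, hρA, hρB, hle,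
    hA, hAB, hconv, hcrit⟩ := h
  let φ : OpenPartialHomeomorph (EuclideanSpace ℂ (Fin n)) (EuclideanSpace ℂ (Fin n)) :=
    { toFun := Φ
      invFun := Ψ
      source := Ω
      target := ω
      map_source' := fun x hx => hΦΩ ▸ mem_image_of_mem Φ hx
      map_target' := by
        rw [← hΦΩ]
        rintro _ ⟨x, hx, rfl⟩
        rwa [hΨΦ x hx]
      left_inv' := hΨΦ
      right_inv' := hΦΨ
      open_source := hΩ
      open_target := hω
      continuousOn_toFun := hΦ.continuousOn
      continuousOn_invFun := hΨ.continuousOn }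
  exact ⟨{
    chart := φ
    ρA := ρA
    ρB := ρB
    source_subset := hΩX
    closure_subset_source := hBΩ
    convex_target := hωc
    differentiableOn_symm := hΨ
    contDiffOn_ρA := contDiffOn_infty.1 hρA 2
    contDiffOn_ρB := contDiffOn_infty.1 hρB 2
    ρB_le_ρA := hle
    isImage_left := OpenPartialHomeomorph.IsImage.of_image_eq (by rw [inter_comm]; exact hA)
    isImage_union := OpenPartialHomeomorph.IsImage.of_image_eq (by rw [inter_comm]; exact hAB)
    hessian_ρA_pos := fun z hz w hw hw0 => (hconv z hz w hw hw0).1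
    hessian_ρB_pos := fun z hz w hw hw0 => (hconv z hz w hw hw0).2
    exists_fderiv_ne_zero := hcrit }⟩

theorem linearIndependent_pair_euclideanSpace_single {ι : Type*} [DecidableEq ι]
    {i j : ι} (hij : i ≠ j) :
    LinearIndependent ℂ ![EuclideanSpace.single i (1 : ℂ), EuclideanSpace.single j 1] := by
  refine LinearIndependent.pair_iff.2 fun a b hab => ⟨?_, ?_⟩
  · simpa [hij] using congr($hab i)
  · simpa [hij.symm] using congr($hab j)

theorem push_boundary_over_convex_bump_general {E : Type*} [NormedAddCommGroup E]
    [NormedSpace ℂ E] [ProperSpace E] {e₁ e₂ : E} (he : LinearIndependent ℂ ![e₁, e₂])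
    {X A B : Set E} (hX : IsOpen X) (hB : IsCompact (closure B))
    (c : ConvexBumpChart (Submodule.span ℂ {e₁, e₂}) X A B) {K : Set E} (hK : IsClosed K)
    (hKA : K ⊆ closure A) {f : ℂ → E} (hf_cont : ContinuousOn f (closedBall 0 1))
    (hf_hol : DifferentiableOn ℂ f (ball 0 1)) (hf_mem : ∀ ζ ∈ closedBall (0 : ℂ) 1, f ζ ∈ X)
    (hf_bd : f '' sphere 0 1 ∩ closure A = ∅) {r : ℝ} (hr : r < 1)
    (hfK : f '' (closedBall 0 1 \ ball 0 r) ∩ K = ∅) {ε : ℝ} (hε : 0 < ε) :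
    ∃ (g : ℂ → E) (R : ℝ), ContinuousOn g (closedBall 0 1) ∧ DifferentiableOn ℂ g (ball 0 1) ∧
      (∀ ζ ∈ closedBall (0 : ℂ) 1, g ζ ∈ X) ∧ g '' sphere 0 1 ∩ closure (A ∪ B) = ∅ ∧
      (∀ ζ ∈ closedBall (0 : ℂ) r, dist (g ζ) (f ζ) < ε) ∧
      g '' (closedBall 0 1 \ ball 0 r) ∩ K = ∅ ∧
      g 0 = f 0 ∧ r < R ∧ R < 1 ∧ deriv g 0 = R • deriv f 0 := by
  simp only [image_inter_eq_empty_iff_mapsTo] at hf_bd hfK ⊢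
  have hf : IsAdmissibleDisc X K r f :=
    ⟨⟨hf_hol, by rwa [closure_ball _ one_ne_zero]⟩, hf_mem, hfK⟩
  obtain ⟨δ, hδ, hspray⟩ := c.exists_isCrossingSpray he hB
  obtain ⟨g, hg, hgAB, hgf⟩ := exists_disc_of_forall_isCrossingSpray hδ hspray hX hK hKA
    c.isClosed_barrier hf (c.barrier_one ▸ hf_bd) hr (half_pos hε)
  obtain ⟨R, hrR, hR1, hgR, hgRAB, hclose⟩ := hg.exists_rescale hX hK isClosed_closure
    (c.barrier_zero ▸ hgAB) hr (half_pos hε)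
  refine ⟨fun ζ => g (R * ζ), R, hgR.continuousOn, hgR.diffContOnCl.1, hgR.mapsTo, hgRAB,
    fun ζ hζ => ?_, hgR.mapsTo_compl, by simpa using hgf.map_zero, hrR, hR1, ?_⟩
  · exact (dist_triangle _ (g ζ) _).trans_lt (by
      linarith [hclose ζ (closedBall_subset_closedBall hr.le hζ), hgf.dist_lt ζ hζ])
  · rw [deriv_comp_mul_left, mul_zero, hgf.deriv_zero, Complex.coe_smul]

/-- the paper's Lemma 3.1 for domains in `ℂⁿ`. If `B` is a convex
2-bump on `A` and the boundary of a holomorphic disc `f` avoids `cl(A)`, then the disc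
can be perturbed so that its boundary avoids `cl(A ∪ B)`, staying close to `f` on
`{|ζ| ≤ r}`, avoiding a compact `K ⊆ A` on `{r ≤ |ζ| ≤ 1}`, keeping the center and
rescaling the derivative at the center. -/
theorem push_boundary_over_convex_bump
    (n : ℕ) (hn : 2 ≤ n)
    (X : Set (EuclideanSpace ℂ (Fin n))) (hX : IsOpen X)
    (A B : Set (EuclideanSpace ℂ (Fin n)))
    (hA : IsOpen A) (hB : IsOpen B)
    (hA_cpt : IsCompact (closure A)) (hB_cpt : IsCompact (closure B))
    (hAX : closure A ⊆ X) (hBX : closure B ⊆ X)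
    (hbump : IsConvexTwoBump n hn X A B)
    (K : Set (EuclideanSpace ℂ (Fin n))) (hK : IsCompact K) (hKA : K ⊆ A)
    (f : ℂ → EuclideanSpace ℂ (Fin n))
    (hf_cont : ContinuousOn f (closedBall (0 : ℂ) 1))
    (hf_hol : DifferentiableOn ℂ f (ball (0 : ℂ) 1))
    (hf_mem : ∀ ζ ∈ closedBall (0 : ℂ) 1, f ζ ∈ X)
    (hf_bd : (f '' sphere (0 : ℂ) 1) ∩ closure A = ∅)
    (r : ℝ) (hr0 : 0 < r) (hr1 : r < 1)
    (hfK : (f '' (closedBall (0 : ℂ) 1 \ ball (0 : ℂ) r)) ∩ K = ∅)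
    (ε : ℝ) (hε : 0 < ε) :
    ∃ (g : ℂ → EuclideanSpace ℂ (Fin n)) (R : ℝ),
      ContinuousOn g (closedBall (0 : ℂ) 1) ∧
      DifferentiableOn ℂ g (ball (0 : ℂ) 1) ∧
      (∀ ζ ∈ closedBall (0 : ℂ) 1, g ζ ∈ X) ∧
      (g '' sphere (0 : ℂ) 1) ∩ closure (A ∪ B) = ∅ ∧
      (∀ ζ ∈ closedBall (0 : ℂ) r, dist (g ζ) (f ζ) < ε) ∧
      (g '' (closedBall (0 : ℂ) 1 \ ball (0 : ℂ) r)) ∩ K = ∅ ∧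
      g 0 = f 0 ∧
      r < R ∧ R < 1 ∧ deriv g 0 = R • deriv f 0 := by
  obtain ⟨c⟩ := hbump.nonempty_convexBumpChart
  have he : LinearIndependent ℂ ![EuclideanSpace.single (⟨0, by omega⟩ : Fin n) (1 : ℂ),
      EuclideanSpace.single (⟨1, by omega⟩ : Fin n) 1] :=
    linearIndependent_pair_euclideanSpace_single (by simp)
  exact push_boundary_over_convex_bump_general he hX hB_cpt c hK.isClosed
    (hKA.trans subset_closure) hf_cont hf_hol hf_mem hf_bd hr1 hfK hε
end
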